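/- arXiv:nlin/0604070 — 3 statements merged into one kernel-verified Lean document; each statement's English description precedes it below -/
import Mathlib

section
/- Fix N ≥ 1 and natural numbers m ≤ r ≤ n. For each multi-index J with |J| ≤ r set K_J := (n−|J| − E)_{r−|J|} ∘ D_J. Then an operator L[f] = Σ_{|I| ≤ r} a_I(x)·D_I f with polynomial coefficients a_I ∈ ℝ[x_1,…,x_N] maps every polynomial of total degree at most n to a polynomial of total degree at most n − m if and only if it can be written as L[f] = Σ_{|J| ≤ r} p_J(x)·K_J[f] with polynomials p_J of total degree at most r − m, and in that case the p_J are uniquely determined. Consequently, the ℝ-vector space of linear differential operators with polynomial coefficients of order at most r mapping P_n^N into P_{n−m}^N has dimension C(N+r−m, r−m)·C(N+r, r). -/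
open MvPolynomial

/-- The weight `|J| = j_1 + ⋯ + j_N` of a multi-index. -/
def mwt {N : ℕ} (J : Fin N → ℕ) : ℕ := ∑ i, J i

/-- The monomial `x^I = x_1^{i_1} ⋯ x_N^{i_N}`. -/
noncomputable def xPow {N : ℕ} (I : Fin N → ℕ) : MvPolynomial (Fin N) ℝ :=
  ∏ i, (X i : MvPolynomial (Fin N) ℝ) ^ I i

/-- The differential operator `D_J = ∂_{x_1}^{j_1} ⋯ ∂_{x_N}^{j_N}`. -/
noncomputable def DJ {N : ℕ} (J : Fin N → ℕ) :
    MvPolynomial (Fin N) ℝ →ₗ[ℝ] MvPolynomial (Fin N) ℝ :=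
  (((List.finRange N).map fun i =>
    (((pderiv i : Derivation ℝ (MvPolynomial (Fin N) ℝ) (MvPolynomial (Fin N) ℝ)).toLinearMap :
      Module.End ℝ (MvPolynomial (Fin N) ℝ)) ^ (J i))).prod)

/-- The Euler operator `E = ∑ x_i ∂_{x_i}`. -/
noncomputable def Euler (N : ℕ) : MvPolynomial (Fin N) ℝ →ₗ[ℝ] MvPolynomial (Fin N) ℝ :=
  ∑ i : Fin N, (LinearMap.mulLeft ℝ (X i : MvPolynomial (Fin N) ℝ)).comp
    (pderiv i : Derivation ℝ (MvPolynomial (Fin N) ℝ) (MvPolynomial (Fin N) ℝ)).toLinearMap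

/-- The Pochhammer operator `(a − E)_k = (a − E)∘((a−1) − E)∘⋯∘((a−k+1) − E)`,
the identity when `k = 0`. -/
noncomputable def pochE (N : ℕ) (a : ℤ) :
    ℕ → (MvPolynomial (Fin N) ℝ →ₗ[ℝ] MvPolynomial (Fin N) ℝ)
  | 0 => LinearMap.id
  | k + 1 => ((a : ℝ) • (LinearMap.id : MvPolynomial (Fin N) ℝ →ₗ[ℝ] MvPolynomial (Fin N) ℝ)
      - Euler N).comp (pochE N (a - 1) k)

/-- The finite set of multi-indices `J ∈ ℕ^N` with `|J| ≤ r`. -/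
def multiIdx (N r : ℕ) : Finset (Fin N → ℕ) :=
  (Fintype.piFinset fun _ : Fin N => Finset.range (r + 1)).filter fun I => ∑ i, I i ≤ r

/-- The maximal deficiency operator `K_J = (n−|J|−E)_{r−|J|} ∘ D_J`. -/
noncomputable def KJ (N n r : ℕ) (J : Fin N → ℕ) :
    MvPolynomial (Fin N) ℝ →ₗ[ℝ] MvPolynomial (Fin N) ℝ :=
  (pochE N ((n : ℤ) - mwt J) (r - mwt J)).comp (DJ J)

/-!
On a homogeneous polynomial of degree `d`, the operator `K_J` acts as the scalar `(n - d)_{r - |J|}`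
times `D_J`. Since this falling factorial vanishes when `n - d < r - |J|`, every `K_J` maps `P_n`
into `P_{n - r}`. Writing `K^{(r)}_J` to display the order, Euler's identity gives
`K^{(r + 1)}_J = (n - r) K^{(r)}_J - ∑ i, x_i K^{(r + 1)}_{J + e_i}` for `|J| ≤ r`, so for `r ≤ n`
the `K_J` and the `D_J` span the same module over the polynomial ring.

If `∑ p_J K_J` maps `P_n` into `P_{n - m}`, apply it to the powers `ℓ ^ (n - r + k)` of a linear
form `ℓ = ∑ i, α_i x_i`: the terms with `|J| < k` vanish, those with `|J| = k` contribute
`c (∑ α ^ J p_J) ℓ ^ (n - r)` with `c ≠ 0`, and those with `|J| > k` are under control by downward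
induction on `k`. Dividing by `ℓ ^ (n - r)` and varying `α` bounds the degree of every `p_J` with
`|J| = k` by `r - m`. The same bound, applied to a relation multiplied by a variable, shows that the
`K_J` are linearly independent, and the dimension is obtained by counting coefficients.
-/

section MultiIndices

lemma ncard_degree_le (σ : Type*) [Fintype σ] (k : ℕ) :
    {d : σ →₀ ℕ | d.degree ≤ k}.ncard = (Fintype.card σ + k).choose k := by
  classical
  have layers : {d : σ →₀ ℕ | d.degree ≤ k} =
      ((Finset.range (k + 1)).biUnion fun j =>
        (Finset.univ : Finset σ).finsuppAntidiag j : Finset (σ →₀ ℕ)) := by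
    ext d
    simp [Finset.mem_finsuppAntidiag, Finsupp.degree_eq_sum]
  have disjoint_layers : (Finset.range (k + 1) : Set ℕ).PairwiseDisjoint
      fun j => (Finset.univ : Finset σ).finsuppAntidiag j := fun i _ j _ hij =>
    Finset.disjoint_left.2 fun d hi hj => hij <| by
      rw [← (Finset.mem_finsuppAntidiag.1 hi).1, (Finset.mem_finsuppAntidiag.1 hj).1]
  rw [layers, Set.ncard_coe_finset, Finset.card_biUnion disjoint_layers]
  simp only [Finset.card_finsuppAntidiag_nat_eq_multichoose, Finset.card_univ]
  rw [Nat.sum_range_multichoose, add_comm, Nat.choose_symm_add]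

lemma finrank_restrictTotalDegree (σ R : Type*) [Fintype σ] [CommRing R] [Nontrivial R] (k : ℕ) :
    Module.finrank R (restrictTotalDegree σ R k) = (Fintype.card σ + k).choose k := by
  rw [← ncard_degree_le, ← Nat.card_coe_set_eq]
  exact Module.finrank_eq_nat_card_basis (basisRestrictSupport R _)

lemma multiIndex_induction {ι : Type*} [Finite ι] [DecidableEq ι] {motive : (ι → ℕ) → Prop}
    (zero : motive 0) (add_single : ∀ J i, motive J → motive (J + Pi.single i 1)) (J : ι → ℕ) :
    motive J := by
  have := Fintype.ofFinite ι
  induction hk : ∑ i, J i generalizing J with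
  | zero =>
    obtain rfl : J = 0 := funext fun i => Finset.sum_eq_zero_iff.1 hk i (Finset.mem_univ i)
    exact zero
  | succ k ih =>
    obtain ⟨i, -, hi⟩ := Finset.exists_ne_zero_of_sum_ne_zero (hk.trans_ne k.succ_ne_zero)
    have hJ : J - Pi.single i 1 + Pi.single i 1 = J := by
      refine tsub_add_cancel_of_le fun j => ?_
      obtain rfl | hji := eq_or_ne j i
      · simpa using Nat.one_le_iff_ne_zero.2 hi
      · simp [hji]
    rw [← hJ] at hk ⊢
    refine add_single _ i (ih _ ?_)
    simpa [Finset.sum_add_distrib] using hk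

variable {N r : ℕ}

lemma mem_multiIdx {J : Fin N → ℕ} : J ∈ multiIdx N r ↔ mwt J ≤ r := by
  simp only [multiIdx, Finset.mem_filter, Fintype.mem_piFinset, Finset.mem_range_succ_iff, mwt,
    and_iff_right_iff_imp]
  exact fun h i => (Finset.single_le_sum (fun _ _ => Nat.zero_le _) (Finset.mem_univ i)).trans h

lemma mwt_add_single (J : Fin N → ℕ) (i : Fin N) : mwt (J + Pi.single i 1) = mwt J + 1 := by
  simp [mwt, Finset.sum_add_distrib]

lemma card_multiIdx (N r : ℕ) : (multiIdx N r).card = (N + r).choose r := by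
  rw [← Fintype.card_fin N, ← ncard_degree_le, ← Nat.card_coe_set_eq, ← Nat.card_eq_finsetCard,
    Fintype.card_fin]
  refine Nat.card_congr (Finsupp.equivFunOnFinite.symm.subtypeEquiv fun J => ?_)
  simp [mem_multiIdx, mwt, Finsupp.degree_eq_sum]

end MultiIndices

section Vandermonde

lemma coeff_mem_of_forall_sum_prod_pow_smul_mem {K V ι : Type*} [Field K] [Infinite K]
    [AddCommGroup V] [Module K V] [Fintype ι] (W : Submodule K V) (s : Finset (ι → ℕ))
    (v : (ι → ℕ) → V)
    (h : ∀ α : ι → K, (∀ i, α i ≠ 0) → ∑ J ∈ s, (∏ i, α i ^ J i) • v J ∈ W) :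
    ∀ J ∈ s, v J ∈ W := by
  classical
  intro M hM
  by_contra hv
  -- A functional killing `W` but not `v M` reduces the claim to scalar coefficients.
  obtain ⟨φ, hφM, hφW⟩ := Submodule.exists_le_ker_of_notMem hv
  let e : (ι → ℕ) ≃ (ι →₀ ℕ) := Finsupp.equivFunOnFinite.symm
  let q : MvPolynomial ι K := ∑ J ∈ s, monomial (e J) (φ (v J))
  have hq : q = 0 := by
    refine funext_set (fun _ => {0}ᶜ) (fun _ => (Set.finite_singleton 0).infinite_compl) ?_
    intro α hα
    have h0 : φ (∑ J ∈ s, (∏ i, α i ^ J i) • v J) = 0 := hφW (h α fun i => hα i trivial)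
    simpa [q, e, eval_monomial, Finsupp.prod_fintype, mul_comm] using h0
  refine hφM ?_
  simpa [q, coeff_sum, coeff_monomial, hM] using congrArg (coeff (e M)) hq

end Vandermonde

section Derivatives

lemma prod_map_pow_add_single {ι M : Type*} [DecidableEq ι] [Monoid M] {A : ι → M}
    (hA : ∀ i j, Commute (A i) (A j)) (J : ι → ℕ) {i : ι} {l : List ι} (hl : l.Nodup)
    (hi : i ∈ l) :
    (l.map fun j => A j ^ (J + Pi.single i 1 : ι → ℕ) j).prod
      = A i * (l.map fun j => A j ^ J j).prod := by
  induction l with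
  | nil => simp at hi
  | cons k l ih =>
    rw [List.nodup_cons] at hl
    simp only [List.map_cons, List.prod_cons]
    obtain rfl | hik := eq_or_ne i k
    · have hrest : (l.map fun j => A j ^ (J + Pi.single i 1 : ι → ℕ) j)
          = l.map fun j => A j ^ J j :=
        List.map_congr_left fun j hj => by simp [ne_of_mem_of_not_mem hj hl.1]
      rw [hrest, Pi.add_apply, Pi.single_eq_same, pow_succ', mul_assoc]
    · rw [ih hl.2 (List.mem_of_ne_of_mem hik hi), Pi.add_apply, Pi.single_eq_of_ne' hik, add_zero,
        ← mul_assoc, ← mul_assoc, ((hA i k).pow_right _).eq]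

lemma pderiv_comm {σ R : Type*} [CommRing R] (i j : σ) (f : MvPolynomial σ R) :
    pderiv i (pderiv j f) = pderiv j (pderiv i f) := by
  have h : ⁅(pderiv i : Derivation R (MvPolynomial σ R) (MvPolynomial σ R)),
      (pderiv j : Derivation R (MvPolynomial σ R) (MvPolynomial σ R))⁆ = 0 := by
    classical
    refine derivation_ext fun k => ?_
    simp [Derivation.commutator_apply, pderiv_X, Pi.single_apply, apply_ite]
  exact sub_eq_zero.1 ((Derivation.commutator_apply f).symm.trans (DFunLike.congr_fun h f))

variable {N : ℕ}

@[simp]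
lemma DJ_zero : DJ (0 : Fin N → ℕ) = LinearMap.id := by
  simp [DJ, Module.End.one_eq_id]

lemma DJ_add_single (J : Fin N → ℕ) (i : Fin N) (f : MvPolynomial (Fin N) ℝ) :
    DJ (J + Pi.single i 1) f = pderiv i (DJ J f) := by
  rw [DJ, prod_map_pow_add_single (fun i j => LinearMap.ext fun f => pderiv_comm i j f) J
    (List.nodup_finRange N) (List.mem_finRange i)]
  rfl

lemma isHomogeneous_DJ {f : MvPolynomial (Fin N) ℝ} {d : ℕ} (hf : f.IsHomogeneous d)
    (J : Fin N → ℕ) : (DJ J f).IsHomogeneous (d - mwt J) := by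
  induction J using multiIndex_induction with
  | zero => simpa [mwt] using hf
  | add_single J i ih =>
    rw [DJ_add_single, mwt_add_single, ← Nat.sub_sub]
    exact ih.pderiv

end Derivatives

section Euler

variable {N : ℕ}

lemma Euler_apply (f : MvPolynomial (Fin N) ℝ) : Euler N f = ∑ i, X i * pderiv i f := by
  simp [Euler, LinearMap.sum_apply]

lemma Euler_of_isHomogeneous {f : MvPolynomial (Fin N) ℝ} {d : ℕ} (hf : f.IsHomogeneous d) :
    Euler N f = (d : ℝ) • f := by
  rw [Euler_apply, hf.sum_X_mul_pderiv, Nat.cast_smul_eq_nsmul]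

lemma Euler_pderiv (i : Fin N) (f : MvPolynomial (Fin N) ℝ) :
    Euler N (pderiv i f) = pderiv i (Euler N f) - pderiv i f := by
  simp [Euler_apply, pderiv_X, Pi.single_apply, Finset.sum_add_distrib, pderiv_comm i]

lemma Euler_DJ (J : Fin N → ℕ) (f : MvPolynomial (Fin N) ℝ) :
    Euler N (DJ J f) = DJ J (Euler N f) - (mwt J : ℝ) • DJ J f := by
  induction J using multiIndex_induction with
  | zero => simp [mwt]
  | add_single J i ih =>
    simp only [DJ_add_single, Euler_pderiv, ih, mwt_add_single, map_sub, Derivation.map_smul,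
      Nat.cast_succ, add_smul, one_smul, sub_sub]

lemma pochE_apply_of_Euler_eq_smul {g : MvPolynomial (Fin N) ℝ} {c : ℝ} (hg : Euler N g = c • g)
    (a : ℤ) (k : ℕ) : pochE N a k g = (descPochhammer ℝ k).eval (a - c) • g := by
  induction k generalizing a with
  | zero => simp [pochE]
  | succ k ih =>
    simp only [pochE, LinearMap.comp_apply, LinearMap.sub_apply, LinearMap.smul_apply,
      LinearMap.id_apply, ih, map_smul, hg, ← sub_smul, smul_smul, descPochhammer_succ_left,
      Polynomial.eval_mul, Polynomial.eval_X, Polynomial.eval_comp, Polynomial.eval_sub,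
      Polynomial.eval_one, Int.cast_sub, Int.cast_one, sub_right_comm, mul_comm]

variable {n r : ℕ}

lemma KJ_of_isHomogeneous {f : MvPolynomial (Fin N) ℝ} {d : ℕ} (hf : f.IsHomogeneous d)
    (J : Fin N → ℕ) :
    KJ N n r J f = (descPochhammer ℝ (r - mwt J)).eval ((n : ℝ) - d) • DJ J f := by
  have hDJ : Euler N (DJ J f) = ((d : ℝ) - mwt J) • DJ J f := by
    rw [Euler_DJ, Euler_of_isHomogeneous hf, map_smul, sub_smul]
  rw [KJ, LinearMap.comp_apply, pochE_apply_of_Euler_eq_smul hDJ]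
  push_cast
  rw [sub_sub_sub_cancel_right]

lemma linearMap_ext_of_isHomogeneous {σ R M : Type*} [CommSemiring R] [AddCommMonoid M] [Module R M]
    {S T : MvPolynomial σ R →ₗ[R] M}
    (h : ∀ (d : ℕ) (f : MvPolynomial σ R), f.IsHomogeneous d → S f = T f) : S = T :=
  (basisMonomials σ R).ext fun s => by
    simpa only [coe_basisMonomials] using h s.degree _ (isHomogeneous_monomial 1 rfl)

lemma KJ_succ {J : Fin N → ℕ} (hJ : mwt J ≤ r) :
    KJ N n (r + 1) J = ((n : ℝ) - r) • KJ N n r J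
      - ∑ i, (X i : MvPolynomial (Fin N) ℝ) • KJ N n (r + 1) (J + Pi.single i 1) := by
  obtain ⟨k, rfl⟩ := Nat.exists_eq_add_of_le hJ
  refine linearMap_ext_of_isHomogeneous fun d f hf => ?_
  set φ := (descPochhammer ℝ k).eval ((n : ℝ) - d)
  have hleft : KJ N n (mwt J + k + 1) J f = (φ * ((n : ℝ) - d - k)) • DJ J f := by
    rw [KJ_of_isHomogeneous hf, add_assoc, Nat.add_sub_cancel_left, descPochhammer_succ_eval]
  have hright : KJ N n (mwt J + k) J f = φ • DJ J f := by
    rw [KJ_of_isHomogeneous hf, Nat.add_sub_cancel_left]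
  have hsum : ∑ i, X i * KJ N n (mwt J + k + 1) (J + Pi.single i 1) f
      = (φ * ((d : ℝ) - mwt J)) • DJ J f := by
    simp only [KJ_of_isHomogeneous hf, mwt_add_single, Nat.add_sub_add_right,
      Nat.add_sub_cancel_left, DJ_add_single, mul_smul_comm, ← Finset.smul_sum, ← Euler_apply,
      Euler_DJ, Euler_of_isHomogeneous hf, map_smul, ← sub_smul, smul_smul, φ]
  simp only [LinearMap.sub_apply, LinearMap.smul_apply, LinearMap.sum_apply, smul_eq_mul, hleft,
    hright, hsum, smul_smul, ← sub_smul]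
  congr 1
  push_cast
  ring

end Euler

section Span

/-- The module over the polynomial ring of the differential operators of order at most `r`. -/
noncomputable def diffOps (N r : ℕ) :
    Submodule (MvPolynomial (Fin N) ℝ) (Module.End ℝ (MvPolynomial (Fin N) ℝ)) :=
  Submodule.span _ (DJ '' multiIdx N r)

/-- The module over the polynomial ring spanned by the operators `K_J` with `|J| ≤ r`. -/
noncomputable def spanKJ (N n r : ℕ) :
    Submodule (MvPolynomial (Fin N) ℝ) (Module.End ℝ (MvPolynomial (Fin N) ℝ)) :=
  Submodule.span _ (KJ N n r '' multiIdx N r)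

variable {N n r : ℕ}

lemma DJ_mem_diffOps {J : Fin N → ℕ} (hJ : mwt J ≤ r) : DJ J ∈ diffOps N r :=
  Submodule.subset_span (Set.mem_image_of_mem _ (mem_multiIdx.2 hJ))

lemma KJ_mem_spanKJ {J : Fin N → ℕ} (hJ : mwt J ≤ r) : KJ N n r J ∈ spanKJ N n r :=
  Submodule.subset_span (Set.mem_image_of_mem _ (mem_multiIdx.2 hJ))

lemma mem_diffOps_iff {L : Module.End ℝ (MvPolynomial (Fin N) ℝ)} :
    L ∈ diffOps N r ↔
      ∃ a : (Fin N → ℕ) → MvPolynomial (Fin N) ℝ, ∑ I ∈ multiIdx N r, a I • DJ I = L :=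
  Submodule.mem_span_image_finset_iff_exists_fun' _

lemma diffOps_le_iff {W : Submodule (MvPolynomial (Fin N) ℝ) _} :
    diffOps N r ≤ W ↔ ∀ J : Fin N → ℕ, mwt J ≤ r → DJ J ∈ W := by
  simp [diffOps, Submodule.span_le, Set.subset_def, mem_multiIdx]

lemma spanKJ_le_iff {W : Submodule (MvPolynomial (Fin N) ℝ) _} :
    spanKJ N n r ≤ W ↔ ∀ J : Fin N → ℕ, mwt J ≤ r → KJ N n r J ∈ W := by
  simp [spanKJ, Submodule.span_le, Set.subset_def, mem_multiIdx]

lemma diffOps_mono : Monotone (diffOps N) := fun _ _ hrs =>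
  diffOps_le_iff.2 fun _ hJ => DJ_mem_diffOps (hJ.trans hrs)

lemma KJ_mwt (J : Fin N → ℕ) : KJ N n (mwt J) J = DJ J := by
  simp [KJ, pochE, LinearMap.id_comp]

lemma KJ_mem_diffOps {J : Fin N → ℕ} (hJ : mwt J ≤ r) : KJ N n r J ∈ diffOps N r := by
  obtain ⟨k, rfl⟩ := Nat.exists_eq_add_of_le hJ
  clear hJ
  induction k generalizing J with
  | zero => exact (KJ_mwt J).symm ▸ DJ_mem_diffOps le_rfl
  | succ k ih =>
    rw [← add_assoc, KJ_succ (Nat.le_add_right _ _)]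
    refine sub_mem (Submodule.smul_of_tower_mem _ _ (diffOps_mono (Nat.le_succ _) ih))
      (sum_mem fun i _ => Submodule.smul_mem _ _ ?_)
    rw [add_right_comm, ← mwt_add_single J i]
    exact ih

lemma spanKJ_le_succ (hrn : r < n) : spanKJ N n r ≤ spanKJ N n (r + 1) := by
  refine spanKJ_le_iff.2 fun J hJ => ?_
  have hne : (n : ℝ) - r ≠ 0 := sub_ne_zero.2 (by exact_mod_cast hrn.ne')
  rw [← inv_smul_smul₀ hne (KJ N n r J), ← add_eq_of_eq_sub (KJ_succ hJ)]
  refine Submodule.smul_of_tower_mem _ _ (add_mem (KJ_mem_spanKJ (Nat.le_succ_of_le hJ))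
    (sum_mem fun i _ => Submodule.smul_mem _ _ (KJ_mem_spanKJ ?_)))
  rw [mwt_add_single]
  exact Nat.succ_le_succ hJ

lemma DJ_mem_spanKJ (hrn : r ≤ n) {J : Fin N → ℕ} (hJ : mwt J ≤ r) : DJ J ∈ spanKJ N n r := by
  induction r, hJ using Nat.le_induction with
  | base => exact KJ_mwt (n := n) J ▸ KJ_mem_spanKJ le_rfl
  | succ r _ ih => exact spanKJ_le_succ hrn (ih (Nat.le_of_succ_le hrn))

lemma spanKJ_eq_diffOps (hrn : r ≤ n) : spanKJ N n r = diffOps N r :=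
  le_antisymm (spanKJ_le_iff.2 fun _ => KJ_mem_diffOps)
    (diffOps_le_iff.2 fun _ => DJ_mem_spanKJ hrn)

lemma mem_diffOps_iff_exists_sum_KJ (hrn : r ≤ n) {L : Module.End ℝ (MvPolynomial (Fin N) ℝ)} :
    L ∈ diffOps N r ↔
      ∃ p : (Fin N → ℕ) → MvPolynomial (Fin N) ℝ, ∑ J ∈ multiIdx N r, p J • KJ N n r J = L := by
  rw [← spanKJ_eq_diffOps hrn]
  exact Submodule.mem_span_image_finset_iff_exists_fun' _

end Span

section DegreeOfProducts

variable {σ R : Type*} [CommSemiring R] {f g : MvPolynomial σ R} {a b : ℕ}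

lemma mul_mem_restrictTotalDegree
    (hf : f ∈ restrictTotalDegree σ R a) (hg : g ∈ restrictTotalDegree σ R b) :
    f * g ∈ restrictTotalDegree σ R (a + b) := by
  rw [mem_restrictTotalDegree] at *
  exact (totalDegree_mul f g).trans (Nat.add_le_add hf hg)

lemma mem_restrictTotalDegree_of_mul [NoZeroDivisors R] (hg0 : g ≠ 0) (hg : g.IsHomogeneous b)
    (h : f * g ∈ restrictTotalDegree σ R (a + b)) : f ∈ restrictTotalDegree σ R a := by
  obtain rfl | hf := eq_or_ne f 0
  · exact zero_mem _
  rw [mem_restrictTotalDegree] at *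
  rwa [totalDegree_mul_of_isDomain hf hg0, hg.totalDegree hg0, Nat.add_le_add_iff_right] at h

end DegreeOfProducts

/-- The linear form `∑ i, α i * x i`. Applying an operator to its powers and letting `α` vary
reads off the coefficients of the operator. -/
noncomputable def linearForm {σ R : Type*} [Fintype σ] [CommSemiring R] (α : σ → R) :
    MvPolynomial σ R :=
  ∑ i, α i • X i

section LinearForms

variable {σ R : Type*} [Fintype σ] [CommSemiring R] {α : σ → R}

lemma isHomogeneous_linearForm_pow (α : σ → R) (d : ℕ) : (linearForm α ^ d).IsHomogeneous d := by
  have hom : (linearForm α).IsHomogeneous 1 := IsHomogeneous.sum _ _ _ fun i _ =>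
    (homogeneousSubmodule σ R 1).smul_mem _ (isHomogeneous_X R i)
  simpa using hom.pow d

lemma linearForm_pow_mem_restrictTotalDegree (α : σ → R) {d e : ℕ} (hde : d ≤ e) :
    linearForm α ^ d ∈ restrictTotalDegree σ R e :=
  (mem_restrictTotalDegree _ _ _).2 ((isHomogeneous_linearForm_pow α d).totalDegree_le.trans hde)

lemma pderiv_linearForm (α : σ → R) (i : σ) : pderiv i (linearForm α) = C (α i) := by
  classical
  simp [linearForm, pderiv_X, Pi.single_apply, smul_eq_C_mul]

lemma linearForm_ne_zero {i : σ} (hα : α i ≠ 0) : linearForm α ≠ 0 := by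
  intro h
  have hi := pderiv_linearForm α i
  rw [h, map_zero, eq_comm, C_eq_zero] at hi
  exact hα hi

end LinearForms

section DegreeBounds

variable {N n r : ℕ}

lemma KJ_apply_mem_restrictTotalDegree {J : Fin N → ℕ} (hJ : mwt J ≤ r)
    {f : MvPolynomial (Fin N) ℝ} (hf : f ∈ restrictTotalDegree (Fin N) ℝ n) :
    KJ N n r J f ∈ restrictTotalDegree (Fin N) ℝ (n - r) := by
  rw [f.as_sum, map_sum]
  refine sum_mem fun s hs => ?_
  have hsn : s.degree ≤ n :=
    (le_totalDegree hs).trans ((mem_restrictTotalDegree _ _ _).1 hf)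
  have hom : (monomial s (coeff s f)).IsHomogeneous s.degree := isHomogeneous_monomial _ rfl
  rw [KJ_of_isHomogeneous hom, ← Nat.cast_sub hsn, descPochhammer_eval_eq_descFactorial]
  obtain hlt | hle := lt_or_ge (n - s.degree) (r - mwt J)
  · simp [Nat.descFactorial_of_lt hlt]
  · refine Submodule.smul_mem _ _ ((mem_restrictTotalDegree _ _ _).2 ?_)
    exact (isHomogeneous_DJ hom J).totalDegree_le.trans (by lia)

lemma DJ_linearForm_pow (α : Fin N → ℝ) (d : ℕ) (J : Fin N → ℕ) :
    DJ J (linearForm α ^ d)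
      = ((d.descFactorial (mwt J) : ℝ) * ∏ i, α i ^ J i) • linearForm α ^ (d - mwt J) := by
  induction J using multiIndex_induction with
  | zero => simp [mwt]
  | add_single J i ih =>
    have hprod : ∏ j, α j ^ (J + Pi.single i 1 : Fin N → ℕ) j = (∏ j, α j ^ J j) * α i := by
      simp only [Pi.add_apply, pow_add, Finset.prod_mul_distrib]
      simp [Pi.single_apply, pow_ite]
    rw [DJ_add_single, ih, mwt_add_single, Derivation.map_smul, Derivation.leibniz_pow,
      pderiv_linearForm, hprod, Nat.descFactorial_succ, Nat.sub_sub]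
    simp only [smul_eq_C_mul, smul_eq_mul, nsmul_eq_mul, map_mul, map_natCast, Nat.cast_mul]
    ring

lemma KJ_linearForm_pow (α : Fin N → ℝ) {d : ℕ} (hd : d ≤ n) (J : Fin N → ℕ) :
    KJ N n r J (linearForm α ^ d)
      = (((n - d).descFactorial (r - mwt J) * d.descFactorial (mwt J) : ℕ) : ℝ) •
          (∏ i, α i ^ J i) • linearForm α ^ (d - mwt J) := by
  rw [KJ_of_isHomogeneous (isHomogeneous_linearForm_pow α d), ← Nat.cast_sub hd,
    descPochhammer_eval_eq_descFactorial, DJ_linearForm_pow, Nat.cast_mul]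
  simp only [smul_smul, mul_assoc]

lemma sum_prod_pow_smul_coeff_mem (hrn : r ≤ n) {b k : ℕ} (hk : k ≤ r)
    {p : (Fin N → ℕ) → MvPolynomial (Fin N) ℝ}
    (hp : ∀ J ∈ multiIdx N r, k < mwt J → p J ∈ restrictTotalDegree (Fin N) ℝ b)
    (hL : ∀ f ∈ restrictTotalDegree (Fin N) ℝ n,
      ∑ J ∈ multiIdx N r, p J * KJ N n r J f ∈ restrictTotalDegree (Fin N) ℝ (b + (n - r)))
    {α : Fin N → ℝ} (hα : linearForm α ≠ 0) :
    ∑ J ∈ multiIdx N r with mwt J = k, (∏ i, α i ^ J i) • p J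
      ∈ restrictTotalDegree (Fin N) ℝ b := by
  -- `K_J (ℓ ^ d)` is zero for `|J| < k` and `c * α ^ J * ℓ ^ (n - r)` for `|J| = k`, where `c` does
  -- not depend on `J`.
  obtain ⟨d, hd⟩ : ∃ d, d = n - r + k := ⟨_, rfl⟩
  have hℓ := linearForm_pow_mem_restrictTotalDegree α (show d ≤ n by lia)
  obtain ⟨c, hc⟩ : ∃ c : ℕ, c = (n - d).descFactorial (r - k) * d.descFactorial k := ⟨_, rfl⟩
  have hc0 : (c : ℝ) ≠ 0 := by
    rw [hc, Nat.cast_ne_zero, mul_ne_zero_iff, Ne, Ne, Nat.descFactorial_eq_zero_iff_lt,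
      Nat.descFactorial_eq_zero_iff_lt]
    lia
  have hterm (J) (hJ : J ∈ multiIdx N r) : p J * KJ N n r J (linearForm α ^ d)
      - (if mwt J = k then ((c : ℝ) • (∏ i, α i ^ J i) • p J) * linearForm α ^ (n - r) else 0)
        ∈ restrictTotalDegree (Fin N) ℝ (b + (n - r)) := by
    obtain hlt | rfl | hgt := lt_trichotomy (mwt J) k
    · rw [KJ_linearForm_pow α (by lia), Nat.descFactorial_of_lt (by lia)]
      simp [hlt.ne]
    · rw [KJ_linearForm_pow α (by lia), ← hc, hd, Nat.add_sub_cancel]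
      simp [smul_smul, mul_comm]
    · rw [if_neg hgt.ne', sub_zero]
      exact mul_mem_restrictTotalDegree (hp J hJ hgt)
        (KJ_apply_mem_restrictTotalDegree (mem_multiIdx.1 hJ) hℓ)
  rw [← Submodule.smul_mem_iff _ hc0, Finset.smul_sum]
  refine mem_restrictTotalDegree_of_mul (pow_ne_zero (n - r) hα)
    (isHomogeneous_linearForm_pow α (n - r)) ?_
  simpa [← Finset.sum_filter, Finset.sum_mul] using
    sub_mem (hL _ hℓ) (sum_mem hterm)

end DegreeBounds

section Decomposition

variable {N n r m : ℕ}

/-- The space of the differential operators of order at most `r` that map polynomials of degree at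
most `n` to polynomials of degree at most `n - m`. -/
noncomputable def degreeLoweringOps (N n r m : ℕ) :
    Submodule ℝ (Module.End ℝ (MvPolynomial (Fin N) ℝ)) :=
  (diffOps N r).restrictScalars ℝ ⊓ Submodule.compatibleMaps
    (restrictTotalDegree (Fin N) ℝ n) (restrictTotalDegree (Fin N) ℝ (n - m))

lemma mem_degreeLoweringOps {L : Module.End ℝ (MvPolynomial (Fin N) ℝ)} :
    L ∈ degreeLoweringOps N n r m ↔ L ∈ diffOps N r ∧
      ∀ f : MvPolynomial (Fin N) ℝ, f.totalDegree ≤ n → (L f).totalDegree ≤ n - m := by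
  simp [degreeLoweringOps, Submodule.compatibleMaps, SetLike.le_def, mem_restrictTotalDegree]

lemma coe_degreeLoweringOps (N n r m : ℕ) :
    (degreeLoweringOps N n r m : Set (Module.End ℝ (MvPolynomial (Fin N) ℝ))) =
      {L | (∃ a : (Fin N → ℕ) → MvPolynomial (Fin N) ℝ,
          L = ∑ I ∈ multiIdx N r, (LinearMap.mulLeft ℝ (a I)).comp (DJ I)) ∧
        ∀ f : MvPolynomial (Fin N) ℝ, f.totalDegree ≤ n → (L f).totalDegree ≤ n - m} := by
  ext L
  rw [SetLike.mem_coe, mem_degreeLoweringOps, mem_diffOps_iff]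
  simp only [eq_comm (b := L)]
  rfl

/-- The operator `∑ p_J K_J` as a function of its coefficients `p_J` of degree at most `b`. -/
noncomputable def ofCoeffs (N n r b : ℕ) :
    (multiIdx N r → restrictTotalDegree (Fin N) ℝ b) →ₗ[ℝ]
      Module.End ℝ (MvPolynomial (Fin N) ℝ) :=
  (Fintype.linearCombination (MvPolynomial (Fin N) ℝ)
      fun J : multiIdx N r => KJ N n r J).restrictScalars ℝ ∘ₗ
    (restrictTotalDegree (Fin N) ℝ b).subtype.compLeft (multiIdx N r)

variable [NeZero N]

lemma coeff_mem_restrictTotalDegree (hrn : r ≤ n) {b : ℕ}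
    {p : (Fin N → ℕ) → MvPolynomial (Fin N) ℝ}
    (hL : ∀ f ∈ restrictTotalDegree (Fin N) ℝ n,
      ∑ J ∈ multiIdx N r, p J * KJ N n r J f ∈ restrictTotalDegree (Fin N) ℝ (b + (n - r)))
    {J : Fin N → ℕ} (hJ : J ∈ multiIdx N r) : p J ∈ restrictTotalDegree (Fin N) ℝ b := by
  induction hd : r - mwt J using Nat.strong_induction_on generalizing J with
  | _ d ih =>
    subst hd
    have hJr := mem_multiIdx.1 hJ
    have higher (M) (hM : M ∈ multiIdx N r) (hlt : mwt J < mwt M) :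
        p M ∈ restrictTotalDegree (Fin N) ℝ b :=
      ih _ (Nat.sub_lt_sub_left (hlt.trans_le (mem_multiIdx.1 hM)) hlt) hM rfl
    exact coeff_mem_of_forall_sum_prod_pow_smul_mem _ _ p
      (fun α hα => sum_prod_pow_smul_coeff_mem hrn hJr higher hL (linearForm_ne_zero (hα 0)))
      J (Finset.mem_filter.2 ⟨hJ, rfl⟩)

lemma linearIndepOn_KJ (hrn : r ≤ n) :
    LinearIndepOn (MvPolynomial (Fin N) ℝ) (KJ N n r) (multiIdx N r) := by
  refine linearIndepOn_finset_iff.2 fun p hp J hJ => ?_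
  -- The relation may be multiplied by a variable, yet the degree bound holds for its coefficients.
  have hX : X 0 * p J ∈ restrictTotalDegree (Fin N) ℝ 0 := by
    refine coeff_mem_restrictTotalDegree (p := fun M => X 0 * p M) hrn (fun f _ => ?_) hJ
    have hf := LinearMap.congr_fun hp f
    simp only [LinearMap.sum_apply, LinearMap.smul_apply, smul_eq_mul, LinearMap.zero_apply] at hf
    simp only [mul_assoc, ← Finset.mul_sum, hf, mul_zero, zero_mem]
  by_contra hpJ
  rw [mem_restrictTotalDegree, totalDegree_mul_of_isDomain (X_ne_zero 0) hpJ, totalDegree_X] at hX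
  lia

lemma forall_sum_mul_KJ_mem_iff (hm : m ≤ r) (hrn : r ≤ n)
    {p : (Fin N → ℕ) → MvPolynomial (Fin N) ℝ} :
    (∀ f ∈ restrictTotalDegree (Fin N) ℝ n,
      ∑ J ∈ multiIdx N r, p J * KJ N n r J f ∈ restrictTotalDegree (Fin N) ℝ (n - m)) ↔
    ∀ J ∈ multiIdx N r, p J ∈ restrictTotalDegree (Fin N) ℝ (r - m) := by
  rw [show n - m = r - m + (n - r) by lia]
  exact ⟨fun hL J hJ => coeff_mem_restrictTotalDegree hrn hL hJ, fun hp f hf =>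
    sum_mem fun J hJ => mul_mem_restrictTotalDegree (hp J hJ)
      (KJ_apply_mem_restrictTotalDegree (mem_multiIdx.1 hJ) hf)⟩

lemma ofCoeffs_injective (hrn : r ≤ n) (b : ℕ) : Function.Injective (ofCoeffs N n r b) :=
  (linearIndependent_iff_injective_fintypeLinearCombination.1 (linearIndepOn_KJ hrn)).comp
    Subtype.val_injective.comp_left

lemma mem_degreeLoweringOps_iff_exists_sum_KJ (hm : m ≤ r) (hrn : r ≤ n)
    {L : Module.End ℝ (MvPolynomial (Fin N) ℝ)} :
    L ∈ degreeLoweringOps N n r m ↔ ∃ p : (Fin N → ℕ) → MvPolynomial (Fin N) ℝ,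
      (∀ J ∈ multiIdx N r, (p J).totalDegree ≤ r - m) ∧
      L = ∑ J ∈ multiIdx N r, p J • KJ N n r J := by
  have hbound (p : (Fin N → ℕ) → MvPolynomial (Fin N) ℝ) :
      (∀ f : MvPolynomial (Fin N) ℝ, f.totalDegree ≤ n →
        ((∑ J ∈ multiIdx N r, p J • KJ N n r J) f).totalDegree ≤ n - m) ↔
      ∀ J ∈ multiIdx N r, (p J).totalDegree ≤ r - m := by
    simpa [mem_restrictTotalDegree] using forall_sum_mul_KJ_mem_iff hm hrn (p := p)
  rw [mem_degreeLoweringOps, mem_diffOps_iff_exists_sum_KJ hrn]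
  constructor
  · rintro ⟨⟨p, rfl⟩, hp⟩
    exact ⟨p, (hbound p).1 hp, rfl⟩
  · rintro ⟨p, hp, rfl⟩
    exact ⟨⟨p, rfl⟩, (hbound p).2 hp⟩

lemma range_ofCoeffs (hm : m ≤ r) (hrn : r ≤ n) :
    LinearMap.range (ofCoeffs N n r (r - m)) = degreeLoweringOps N n r m := by
  ext L
  rw [mem_degreeLoweringOps_iff_exists_sum_KJ hm hrn]
  constructor
  · rintro ⟨p, rfl⟩
    obtain ⟨q, rfl⟩ := Subtype.val_injective.surjective_comp_right p
    exact ⟨fun J => q J, fun J _ => (mem_restrictTotalDegree _ _ _).1 (q J).2,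
      Finset.sum_coe_sort _ fun J => (q J : MvPolynomial (Fin N) ℝ) • KJ N n r J⟩
  · rintro ⟨p, hp, rfl⟩
    exact ⟨fun J => ⟨p J, (mem_restrictTotalDegree _ _ _).2 (hp J J.2)⟩,
      Finset.sum_coe_sort _ fun J => p J • KJ N n r J⟩

lemma existsUnique_sum_KJ (hm : m ≤ r) (hrn : r ≤ n)
    {L : Module.End ℝ (MvPolynomial (Fin N) ℝ)} (hL : L ∈ degreeLoweringOps N n r m) :
    ∃! p : multiIdx N r → MvPolynomial (Fin N) ℝ,
      (∀ J, (p J).totalDegree ≤ r - m) ∧ L = ∑ J, p J • KJ N n r J := by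
  obtain ⟨p, hp, rfl⟩ := (mem_degreeLoweringOps_iff_exists_sum_KJ hm hrn).1 hL
  have hsum := Finset.sum_coe_sort (multiIdx N r) fun J => p J • KJ N n r J
  exact ⟨fun J => p J, ⟨fun J => hp J J.2, hsum.symm⟩, fun q hq =>
    linearIndependent_iff_injective_fintypeLinearCombination.1 (linearIndepOn_KJ hrn)
      (hq.2.symm.trans hsum.symm)⟩

lemma finrank_degreeLoweringOps (hm : m ≤ r) (hrn : r ≤ n) :
    Module.finrank ℝ (degreeLoweringOps N n r m)
      = (N + (r - m)).choose (r - m) * (N + r).choose r := by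
  rw [← range_ofCoeffs hm hrn, LinearMap.finrank_range_of_inj (ofCoeffs_injective hrn _),
    Module.finrank_pi_fintype]
  simp [finrank_restrictTotalDegree, card_multiIdx, mul_comm]

end Decomposition

/-- For `m ≤ r ≤ n`: an operator `L[f] = ∑_{|I|≤r} a_I(x) D_I f` maps
`P_n^N` into `P_{n−m}^N` iff `L = ∑_{|J|≤r} p_J(x)·K_J` with `deg p_J ≤ r−m`, the `p_J`
being uniquely determined; consequently the space of such operators has dimension
`C(N+r−m, r−m)·C(N+r, r)`. -/
theorem mv_operator_decomposition (N n r m : ℕ) (hN : 1 ≤ N) (hm : m ≤ r) (hrn : r ≤ n) :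
    (∀ a : (Fin N → ℕ) → MvPolynomial (Fin N) ℝ,
      ((∀ f : MvPolynomial (Fin N) ℝ, f.totalDegree ≤ n →
          (∑ I ∈ multiIdx N r, a I * DJ I f).totalDegree ≤ n - m) ↔
        (∃ p : (Fin N → ℕ) → MvPolynomial (Fin N) ℝ,
          (∀ J ∈ multiIdx N r, (p J).totalDegree ≤ r - m) ∧
          ∀ f : MvPolynomial (Fin N) ℝ,
            (∑ I ∈ multiIdx N r, a I * DJ I f) = ∑ J ∈ multiIdx N r, p J * KJ N n r J f)) ∧
      ((∀ f : MvPolynomial (Fin N) ℝ, f.totalDegree ≤ n →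
          (∑ I ∈ multiIdx N r, a I * DJ I f).totalDegree ≤ n - m) →
        ∃! p : { J // J ∈ multiIdx N r } → MvPolynomial (Fin N) ℝ,
          (∀ J, (p J).totalDegree ≤ r - m) ∧
          ∀ f : MvPolynomial (Fin N) ℝ,
            (∑ I ∈ multiIdx N r, a I * DJ I f)
              = ∑ J ∈ (multiIdx N r).attach, p J * KJ N n r (J : Fin N → ℕ) f)) ∧
    Module.finrank ℝ
      (Submodule.span ℝ {L : MvPolynomial (Fin N) ℝ →ₗ[ℝ] MvPolynomial (Fin N) ℝ |
        (∃ a : (Fin N → ℕ) → MvPolynomial (Fin N) ℝ,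
          L = ∑ I ∈ multiIdx N r, (LinearMap.mulLeft ℝ (a I)).comp (DJ I)) ∧
        ∀ f : MvPolynomial (Fin N) ℝ, f.totalDegree ≤ n → (L f).totalDegree ≤ n - m})
      = (N + (r - m)).choose (r - m) * (N + r).choose r := by
  have : NeZero N := ⟨Nat.one_le_iff_ne_zero.1 hN⟩
  have hmem (a : (Fin N → ℕ) → MvPolynomial (Fin N) ℝ) :
      (∀ f : MvPolynomial (Fin N) ℝ, f.totalDegree ≤ n →
        (∑ I ∈ multiIdx N r, a I * DJ I f).totalDegree ≤ n - m) ↔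
      ∑ I ∈ multiIdx N r, a I • DJ I ∈ degreeLoweringOps N n r m := by
    simp [mem_degreeLoweringOps, mem_diffOps_iff.2 ⟨a, rfl⟩]
  refine ⟨fun a => ?_, ?_⟩
  · simp only [hmem]
    refine ⟨?_, fun hL => ?_⟩
    · simp [mem_degreeLoweringOps_iff_exists_sum_KJ hm hrn, LinearMap.ext_iff]
    · simpa [LinearMap.ext_iff] using existsUnique_sum_KJ hm hrn hL
  · rw [← coe_degreeLoweringOps, Submodule.span_eq, finrank_degreeLoweringOps hm hrn]
end

section
/- Let n, r be natural numbers with 3r < 2n, and let Q be a real polynomial in the variables x, u_0, u_1, …, u_r. If for every polynomial f ∈ ℝ[x] of degree at most n the polynomial T_Q[f] = Q(x, f, f', …, f^{(r)}) has degree at most n, then every monomial of Q has total degree at most 2 in the variables u_0, …, u_r; that is, any operator of order r < 2n/3 mapping P_n into P_n has at most quadratic non-linearities. -/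
/-- The action of a (possibly non-linear) differential operator of order at most `r`,
given by a polynomial `Q` in the variables `x, u_0, …, u_r` (variable `0` is `x`,
variable `i+1` is `u_i`), on a polynomial `f`: `T_Q[f] = Q(x, f, f', …, f^{(r)})`. -/
noncomputable def Tact {r : ℕ} (Q : MvPolynomial (Fin (r + 2)) ℝ) (f : Polynomial ℝ) :
    Polynomial ℝ :=
  MvPolynomial.aeval
    (Fin.cases Polynomial.X (fun i : Fin (r + 1) => Polynomial.derivative^[(i : ℕ)] f)) Q

/-!
`P_n` is stable under `f ↦ c • f` and under dilations, so it is enough to show that a component `R`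
of `Q` vanishes, where `R` has degree `k > d` in `u_0, …, u_r` and weight `W` under
`f ↦ c ^ r • f (x / c)`. Put `N = n - r`; the assumption on `r` gives `N * k > n`.

For each `j ≤ r` there is `f_j ∈ P_n`, divisible by `x ^ (N + j)`, whose derivatives of orders
`j, j + 1, …, r` at `x = 1` are `1, 0, …, 0`. By triangularity any `v ∈ K ^ (r + 1)` is the jet at
`x = 1` of some combination `∑ τ_j f_j`; deform it to `G = ∑ τ_j s ^ (r - j) f_j`. The coefficient
of `x ^ m` in `G` is divisible by `s ^ (n - m)`, hence by homogeneity that of `x ^ q` in `T_R[G]` is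
divisible by `s ^ (N * k + W - q)`. As `T_R[G]` has degree at most `n` in `x`, its value at `x = 1`
is divisible by `s ^ (W + 1)`. But the `i`-th derivative of `G` at `x = 1` has degree at most
`r - i` in `s`, so this value has degree at most `W` in `s`. It is therefore zero, and `s = 1`
gives `R(1, v) = 0`.
-/

section WeightedHomogeneous

open MvPolynomial

variable {σ K A : Type*} {w : σ → ℕ} {d : ℕ}

theorem aeval_pow_mul_of_isWeightedHomogeneous [CommSemiring K] [CommSemiring A] [Algebra K A]
    {R : MvPolynomial σ K} (hR : IsWeightedHomogeneous w R d) (c : A) (g : σ → A) :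
    aeval (fun i => c ^ w i * g i) R = c ^ d * aeval g R := by
  simp only [aeval_def, eval₂_eq, Finset.mul_sum]
  refine Finset.sum_congr rfl fun s hs => ?_
  have hw : ∑ i ∈ s.support, w i * s i = d := by
    simpa [Finsupp.weight_apply, Finsupp.sum, mul_comm] using hR (mem_support_iff.mp hs)
  simp only [mul_pow, ← pow_mul, Finset.prod_mul_distrib, Finset.prod_pow_eq_pow_sum, hw]
  exact mul_left_comm _ _ _

theorem pow_dvd_aeval_of_isWeightedHomogeneous [CommSemiring K] [CommSemiring A] [Algebra K A]
    {R : MvPolynomial σ K} (hR : IsWeightedHomogeneous w R d) {c : A} {g : σ → A}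
    (hg : ∀ i, c ^ w i ∣ g i) : c ^ d ∣ aeval g R := by
  choose q hq using hg
  exact ⟨aeval q R, by rw [← aeval_pow_mul_of_isWeightedHomogeneous hR, ← _root_.funext hq]⟩

theorem natDegree_aeval_le_of_isWeightedHomogeneous [CommSemiring K] [CommSemiring A]
    [Algebra K A] {R : MvPolynomial σ K} (hR : IsWeightedHomogeneous w R d)
    {g : σ → Polynomial A} (hg : ∀ i, (g i).natDegree ≤ w i) : (aeval g R).natDegree ≤ d := by
  rw [aeval_def, eval₂_eq]
  refine Polynomial.natDegree_sum_le_of_forall_le _ _ fun s hs => ?_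
  have hw : ∑ i ∈ s.support, s i * w i = d := by
    simpa [Finsupp.weight_apply, Finsupp.sum] using hR (mem_support_iff.mp hs)
  calc (algebraMap K (Polynomial A) (R.coeff s) * ∏ i ∈ s.support, g i ^ s i).natDegree
      ≤ (∏ i ∈ s.support, g i ^ s i).natDegree := Polynomial.natDegree_C_mul_le _ _
    _ ≤ ∑ i ∈ s.support, (g i ^ s i).natDegree := Polynomial.natDegree_prod_le _ _
    _ ≤ ∑ i ∈ s.support, s i * w i :=
        Finset.sum_le_sum fun i _ => Polynomial.natDegree_pow_le_of_le _ (hg i)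
    _ = d := hw

theorem eq_zero_of_isWeightedHomogeneous_of_eval_eq_zero [Field K] [Infinite K]
    {R : MvPolynomial σ K} (hR : IsWeightedHomogeneous w R d) {j : σ} (hj : w j = 1)
    (h0 : ∀ v : σ → K, v j = 1 → eval v R = 0) : R = 0 := by
  suffices hX : X j * R = 0 from (mul_eq_zero.mp hX).resolve_left (X_ne_zero j)
  refine MvPolynomial.funext fun v => ?_
  rw [map_mul, eval_X, map_zero, mul_eq_zero, or_iff_not_imp_left]
  intro hv
  have hscale : v = fun i => v j ^ w i * ((v j)⁻¹ ^ w i * v i) := by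
    funext i
    rw [← mul_assoc, ← mul_pow, mul_inv_cancel₀ hv, one_pow, one_mul]
  rw [hscale, ← coe_aeval_eq_eval, RingHom.coe_coe, aeval_pow_mul_of_isWeightedHomogeneous hR]
  exact mul_eq_zero_of_right _ (h0 _ (by simp [hj, hv]))

theorem isWeightedHomogeneous_weightedHomogeneousComponent {M M' : Type*} [AddCommMonoid M]
    [AddCommMonoid M'] [CommSemiring K] {w : σ → M} {d : M} {R : MvPolynomial σ K}
    (hR : IsWeightedHomogeneous w R d) (w' : σ → M') (d' : M') :
    IsWeightedHomogeneous w (weightedHomogeneousComponent w' d' R) d := fun s hs => by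
  classical
  rw [coeff_weightedHomogeneousComponent] at hs
  exact hR fun h0 => hs (by rw [h0, ite_self])

theorem isWeightedHomogeneous_mul_add [CommSemiring K] {R : MvPolynomial σ K} {w' : σ → ℕ}
    {d' : ℕ} (hR : IsWeightedHomogeneous w R d) (hR' : IsWeightedHomogeneous w' R d') (N : ℕ) :
    IsWeightedHomogeneous (fun i => N * w i + w' i) R (N * d + d') := fun s hs => by
  rw [← hR hs, ← hR' hs]
  simp only [Finsupp.weight_apply, Finsupp.sum, Finset.mul_sum, ← Finset.sum_add_distrib,
    smul_eq_mul]
  exact Finset.sum_congr rfl fun i _ => by ring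

end WeightedHomogeneous

open Polynomial

section Polynomials

variable {K : Type*} [Field K]

theorem mem_of_forall_sum_pow_smul_mem [Infinite K] {M : Type*} [AddCommGroup M] [Module K M]
    {V : Submodule K M} {s : Finset ℕ} {p : ℕ → M}
    (h : ∀ c : K, c ≠ 0 → ∑ e ∈ s, c ^ e • p e ∈ V) {d : ℕ} (hd : d ∈ s) : p d ∈ V := by
  rw [← Submodule.Quotient.mk_eq_zero, ← Module.forall_dual_apply_eq_zero_iff K]
  intro φ
  set q : K[X] := ∑ e ∈ s, monomial e (φ (V.mkQ (p e))) with hq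
  have hroot : ∀ c ≠ 0, q.IsRoot c := fun c hc => by
    have hφ : φ (V.mkQ (∑ e ∈ s, c ^ e • p e)) = 0 := by
      rw [Submodule.mkQ_apply, (Submodule.Quotient.mk_eq_zero V).mpr (h c hc), map_zero]
    simpa [hq, IsRoot, eval_finsetSum, mul_comm] using hφ
  have hq0 : q = 0 := eq_zero_of_infinite_isRoot q
    ((Set.finite_singleton (0 : K)).infinite_compl.mono hroot)
  simpa [hq, finsetSum_coeff, coeff_monomial, hd] using congrArg (coeff · d) hq0

theorem iterate_derivative_comp_C_mul_X {A : Type*} [CommSemiring A] (f : A[X]) (a : A) (i : ℕ) :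
    derivative^[i] (f.comp (C a * X)) = C a ^ i * (derivative^[i] f).comp (C a * X) := by
  induction i with
  | zero => simp
  | succ i ih =>
    rw [Function.iterate_succ_apply', ih, ← C_pow, derivative_C_mul, derivative_comp,
      Function.iterate_succ_apply', derivative_C_mul, derivative_X, mul_one, C_pow, pow_succ,
      mul_assoc]

theorem C_pow_sub_dvd_iterate_derivative_comp {A : Type*} [CommRing A] [IsDomain A] {y : A}
    (hy : y ≠ 0) {f : A[X]} {n i : ℕ} (hi : i ≤ n) (h : C y ^ n ∣ f.comp (C y * X)) :
    C y ^ (n - i) ∣ (derivative^[i] f).comp (C y * X) := by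
  obtain ⟨q, hq⟩ := h
  have hC : (C y : A[X]) ^ i ≠ 0 := pow_ne_zero i (C_ne_zero.mpr hy)
  rw [← mul_dvd_mul_iff_left hC, ← pow_add, Nat.add_sub_cancel' hi,
    ← iterate_derivative_comp_C_mul_X, hq, ← C_pow, iterate_derivative_C_mul]
  exact dvd_mul_right _ _

theorem mvPolynomial_aeval_comp {σ K A : Type*} [CommSemiring K] [CommSemiring A] [Algebra K A]
    (g : σ → A[X]) (R : MvPolynomial σ K) (p : A[X]) :
    (MvPolynomial.aeval g R).comp p = MvPolynomial.aeval (fun i => (g i).comp p) R :=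
  MvPolynomial.comp_aeval_apply g ((Polynomial.aeval (R := A) p).restrictScalars K) R

theorem eval_mvPolynomial_aeval {σ K A : Type*} [CommSemiring K] [CommSemiring A] [Algebra K A]
    (x : A) (g : σ → A[X]) (R : MvPolynomial σ K) :
    (MvPolynomial.aeval g R).eval x = MvPolynomial.aeval (fun i => (g i).eval x) R :=
  MvPolynomial.comp_aeval_apply g ((Polynomial.aeval (R := A) x).restrictScalars K) R

theorem pow_sub_dvd_eval_of_C_pow_dvd_comp {A : Type*} [CommRing A] [IsDomain A] {y : A}
    (hy : y ≠ 0) {p : A[X]} {n N : ℕ} (hp : p.degree ≤ n) (h : C y ^ N ∣ p.comp (C y * X))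
    (x : A) : y ^ (N - n) ∣ p.eval x := by
  rcases le_total N n with hNn | hnN
  · simp [hNn]
  rw [eval_eq_sum_range]
  refine Finset.dvd_sum fun q hq => Dvd.dvd.mul_right ?_ _
  have hqn : q ≤ n := (Finset.mem_range_succ_iff.mp hq).trans (natDegree_le_of_degree_le hp)
  rw [← C_pow, C_dvd_iff_dvd_coeff] at h
  have hcoeff : y ^ (N - q) * y ^ q ∣ p.coeff q * y ^ q := by
    rw [← pow_add, Nat.sub_add_cancel (hqn.trans hnN), ← comp_C_mul_X_coeff]
    exact h q
  exact (pow_dvd_pow y (by omega)).trans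
    ((mul_dvd_mul_iff_right (pow_ne_zero q hy)).mp hcoeff)

theorem exists_iterate_derivative_X_pow_mul_eq [CharZero K] (v : K[X]) (a j : ℕ) :
    ∃ g : K[X], g.natDegree ≤ v.natDegree ∧
      derivative^[j] (X ^ (a + j) * g) = X ^ a * v := by
  set g : K[X] := ∑ q ∈ v.support,
    monomial q (((q + (a + j)).descFactorial j : K)⁻¹ * v.coeff q) with hg
  have hcoeff : ∀ q, g.coeff q = ((q + (a + j)).descFactorial j : K)⁻¹ * v.coeff q := fun q => by
    rw [hg, finsetSum_coeff]
    simp only [coeff_monomial]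
    rw [Finset.sum_ite_eq', ite_eq_left_iff, notMem_support_iff]
    intro hq
    rw [hq, mul_zero]
  refine ⟨g, natDegree_le_iff_coeff_eq_zero.mpr fun q hq => ?_, ?_⟩
  · rw [hcoeff, coeff_eq_zero_of_natDegree_lt hq, mul_zero]
  ext m
  rw [coeff_iterate_derivative, coeff_X_pow_mul', coeff_X_pow_mul', Nat.add_sub_add_right,
    hcoeff, nsmul_eq_mul]
  by_cases ham : a ≤ m
  · have hne : ((m + j).descFactorial j : K) ≠ 0 := by
      simp [Nat.descFactorial_eq_zero_iff_lt]
    rw [if_pos (by omega), if_pos ham, show m - a + (a + j) = m + j by omega,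
      mul_inv_cancel_left₀ hne]
  · rw [if_neg (by omega), if_neg ham, mul_zero]

theorem exists_X_sub_one_pow_dvd_X_pow_mul_sub_one {A : Type*} [CommRing A] [Nontrivial A]
    (a m : ℕ) : ∃ v : A[X], v.natDegree ≤ m ∧ (X - C 1) ^ (m + 1) ∣ X ^ a * v - 1 := by
  obtain ⟨u, v, huv⟩ : IsCoprime ((X - C 1 : A[X]) ^ (m + 1)) (X ^ a) :=
    IsCoprime.pow ⟨-1, 1, by simp⟩
  set P : A[X] := (X - C 1) ^ (m + 1) with hP
  have hmonic : P.Monic := (monic_X_sub_C 1).pow _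
  have hdeg : P.natDegree = m + 1 := by
    rw [hP, (monic_X_sub_C 1).natDegree_pow, natDegree_X_sub_C, mul_one]
  refine ⟨v %ₘ P, ?_, -u - X ^ a * (v /ₘ P), ?_⟩
  · have := natDegree_modByMonic_lt v hmonic fun h => by simp [h] at hdeg
    omega
  · linear_combination X ^ a * modByMonic_add_div v P + huv

theorem exists_flag_polynomial [CharZero K] (N : ℕ) {r j : ℕ} (hjr : j ≤ r) :
    ∃ f : K[X], f.degree ≤ (N + r : ℕ) ∧ X ^ (N + j) ∣ f ∧ (derivative^[j] f).eval 1 = 1 ∧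
      ∀ i, j < i → i ≤ r → (derivative^[i] f).eval 1 = 0 := by
  obtain ⟨v, hvdeg, hv⟩ := exists_X_sub_one_pow_dvd_X_pow_mul_sub_one (A := K) N (r - j)
  obtain ⟨g, hgdeg, hg⟩ := exists_iterate_derivative_X_pow_mul_eq v N j
  have htaylor : ∀ l ≤ r - j, (derivative^[l] (X ^ N * v - 1)).eval 1 = 0 := fun l hl =>
    dvd_iff_isRoot.mp ((dvd_pow_self _ (by omega)).trans
      (pow_sub_dvd_iterate_derivative_of_pow_dvd l hv))
  refine ⟨X ^ (N + j) * g, ?_, dvd_mul_right _ _, ?_, fun i hji hir => ?_⟩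
  · refine degree_le_of_natDegree_le (natDegree_mul_le.trans ?_)
    rw [natDegree_X_pow]
    omega
  · rw [hg]
    simpa [sub_eq_zero] using htaylor 0 (Nat.zero_le _)
  · obtain ⟨l, rfl⟩ : ∃ l, i = l + 1 + j := ⟨i - j - 1, by omega⟩
    have hl := htaylor (l + 1) (by omega)
    rwa [iterate_derivative_sub, iterate_derivative_one l.succ_pos, sub_zero, ← hg,
      ← Function.iterate_add_apply] at hl

theorem isUnit_of_isUpperTriangular_of_diag_eq_one {ι A : Type*} [Fintype ι] [DecidableEq ι]
    [LinearOrder ι] [CommRing A] {J : Matrix ι ι A} (htri : J.IsUpperTriangular)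
    (hdiag : ∀ i, J i i = 1) : IsUnit J := by
  rw [Matrix.isUnit_iff_isUnit_det, Matrix.det_of_isUpperTriangular htri]
  simp [hdiag]

theorem exists_deformation [CharZero K] (N : ℕ) {r : ℕ} (v : Fin (r + 1) → K) :
    ∃ G : K[X][X], G.degree ≤ (N + r : ℕ) ∧ C X ^ (N + r) ∣ G.comp (C X * X) ∧
      ∀ i : Fin (r + 1), ((derivative^[i] G).eval 1).natDegree ≤ r - i ∧
        ((derivative^[i] G).eval 1).eval 1 = v i := by
  choose f hdeg hdvd hone hzero using
    fun j : Fin (r + 1) => exists_flag_polynomial (K := K) N (Nat.lt_succ_iff.mp j.2)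
  set J : Matrix (Fin (r + 1)) (Fin (r + 1)) K :=
    Matrix.of fun i j => (derivative^[i] (f j)).eval 1 with hJ
  have hJunit : IsUnit J := isUnit_of_isUpperTriangular_of_diag_eq_one
    (fun i j hji => hzero j i hji (Nat.lt_succ_iff.mp i.2)) hone
  obtain ⟨τ, hτ⟩ := Matrix.mulVec_surjective_iff_isUnit.mpr hJunit v
  set G : K[X][X] := ∑ j, C (C (τ j) * X ^ (r - j : ℕ)) * (f j).map C with hG
  have heval : ∀ i : Fin (r + 1),
      (derivative^[i] G).eval 1 = ∑ j, C (J i j * τ j) * X ^ (r - j : ℕ) := fun i => by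
    rw [hG, iterate_derivative_sum, eval_finsetSum]
    refine Finset.sum_congr rfl fun j _ => ?_
    rw [iterate_derivative_C_mul, iterate_derivative_map, eval_mul, eval_C, eval_one_map, C_mul,
      mul_right_comm, mul_comm (C (τ j)), hJ, Matrix.of_apply]
  refine ⟨G, ?_, ?_, fun i => ⟨?_, ?_⟩⟩
  · refine (degree_sum_le _ _).trans (Finset.sup_le fun j _ => ?_)
    rw [← smul_eq_C_mul]
    exact (degree_smul_le _ _).trans (degree_map_le.trans (hdeg j))
  · rw [hG, Polynomial.sum_comp]
    refine Finset.dvd_sum fun j _ => ?_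
    obtain ⟨q, hq⟩ := hdvd j
    refine ⟨C (C (τ j)) * X ^ (N + j : ℕ) * (q.map C).comp (C X * X), ?_⟩
    have hexp : N + r = (r - j) + (N + j : ℕ) := by omega
    simp only [hq, hexp, C_mul, C_pow, Polynomial.map_mul, Polynomial.map_pow, map_X, mul_comp,
      pow_comp, C_comp, X_comp]
    ring
  · rw [heval]
    refine natDegree_sum_le_of_forall_le _ _ fun j _ => ?_
    rcases lt_or_ge j i with hji | hij
    · simp [hJ, hzero j i hji (Nat.lt_succ_iff.mp i.2)]
    · exact (natDegree_C_mul_X_pow_le _ _).trans (Nat.sub_le_sub_left hij r)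
  · rw [heval, ← hτ]
    simp [eval_finsetSum, Matrix.mulVec, dotProduct]

end Polynomials

section Jets

variable {K A B : Type*} {n r : ℕ}

/-- The values `x, f, f', …, f^{(r)}` substituted for the variables `x, u_0, …, u_r`. -/
noncomputable def jet [Semiring A] (r : ℕ) (f : A[X]) : Fin (r + 2) → A[X] :=
  Fin.cases X fun i : Fin (r + 1) => derivative^[i] f

@[simp]
theorem jet_zero [Semiring A] (f : A[X]) : jet r f 0 = X := rfl

@[simp]
theorem jet_succ [Semiring A] (f : A[X]) (i : Fin (r + 1)) :
    jet r f i.succ = derivative^[i] f := rfl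

theorem jet_map [Semiring A] [Semiring B] (φ : A →+* B) (f : A[X]) (i : Fin (r + 2)) :
    jet r (f.map φ) i = (jet r f i).map φ := by
  refine Fin.cases ?_ (fun j => ?_) i
  · simp
  · simp [iterate_derivative_map]

/-- The weights of `x, u_0, …, u_r` that measure the degree in `u_0, …, u_r`. -/
def degWeight (r : ℕ) : Fin (r + 2) → ℕ := Fin.cases 0 fun _ => 1

/-- The weights of `x, u_0, …, u_r` under the dilations `f ↦ c ^ r • f (x / c)`. -/
def dilWeight (r : ℕ) : Fin (r + 2) → ℕ := Fin.cases 1 fun i : Fin (r + 1) => r - i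

@[simp]
theorem degWeight_zero : degWeight r 0 = 0 := rfl

@[simp]
theorem degWeight_succ (i : Fin (r + 1)) : degWeight r i.succ = 1 := rfl

@[simp]
theorem dilWeight_zero : dilWeight r 0 = 1 := rfl

@[simp]
theorem dilWeight_succ (i : Fin (r + 1)) : dilWeight r i.succ = r - i := rfl

@[simp]
theorem weight_degWeight (s : Fin (r + 2) →₀ ℕ) :
    Finsupp.weight (degWeight r) s = ∑ i : Fin (r + 1), s i.succ := by
  rw [Finsupp.weight_apply, Finsupp.sum_fintype _ _ (by simp), Fin.sum_univ_succ]
  simp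

/-- The operator `f ↦ Q(x, f, f', …, f^{(r)})`, acting on polynomials over a `K`-algebra `A`, maps
polynomials of degree at most `n` to polynomials of degree at most `n`. -/
def PreservesDegreeLE [CommSemiring K] (A : Type*) [CommSemiring A] [Algebra K A] (n : ℕ)
    (Q : MvPolynomial (Fin (r + 2)) K) : Prop :=
  ∀ f : A[X], f.degree ≤ n → (MvPolynomial.aeval (jet r f) Q).degree ≤ n

namespace PreservesDegreeLE

section Components

variable [Field K] [Infinite K] {Q : MvPolynomial (Fin (r + 2)) K}

theorem polynomial (hQ : PreservesDegreeLE K n Q) : PreservesDegreeLE K[X] n Q := by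
  intro f hf
  rw [degree_le_iff_coeff_zero]
  intro m hm
  refine Polynomial.funext fun s => ?_
  have hmap : (MvPolynomial.aeval (jet r f) Q).map (evalRingHom s) =
      MvPolynomial.aeval (jet r (f.map (evalRingHom s))) Q := by
    rw [_root_.funext (jet_map (evalRingHom s) f)]
    exact MvPolynomial.comp_aeval_apply (jet r f) (mapAlgHom (Polynomial.aeval s)) Q
  rw [eval_zero, ← coe_evalRingHom, ← coeff_map, hmap]
  exact coeff_eq_zero_of_degree_lt ((hQ _ (degree_map_le.trans hf)).trans_lt hm)

theorem weightedHomogeneousComponent (hQ : PreservesDegreeLE K n Q) {w : Fin (r + 2) → ℕ}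
    (hsym : ∀ c : K, c ≠ 0 → ∀ f : K[X], f.degree ≤ n → ∃ g : K[X], g.degree ≤ n ∧
      ∃ a ≠ 0, ∀ i, jet r g i = C c ^ w i * (jet r f i).comp (C a * X)) (d : ℕ) :
    PreservesDegreeLE K n (MvPolynomial.weightedHomogeneousComponent w d Q) := by
  classical
  intro f hf
  let T : ℕ → K[X] := fun e =>
    MvPolynomial.aeval (jet r f) (MvPolynomial.weightedHomogeneousComponent w e Q)
  have hfin := MvPolynomial.weightedHomogeneousComponent_finsupp (w := w) Q
  let s := insert d hfin.toFinset
  have hsum : ∑ e ∈ s, MvPolynomial.weightedHomogeneousComponent w e Q = Q := by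
    rw [← finsum_eq_sum_of_support_subset _ fun e he =>
      Finset.mem_insert_of_mem (hfin.mem_toFinset.mpr he),
      MvPolynomial.sum_weightedHomogeneousComponent]
  suffices hmem : ∀ c : K, c ≠ 0 → ∑ e ∈ s, c ^ e • T e ∈ degreeLE K n from
    mem_degreeLE.mp (mem_of_forall_sum_pow_smul_mem hmem (Finset.mem_insert_self d _))
  intro c hc
  obtain ⟨g, hg, a, ha, hjet⟩ := hsym c hc f hf
  have hTg : MvPolynomial.aeval (jet r g) Q = (∑ e ∈ s, c ^ e • T e).comp (C a * X) := by
    conv_lhs => rw [← hsum, map_sum]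
    rw [Polynomial.sum_comp]
    refine Finset.sum_congr rfl fun e _ => ?_
    rw [_root_.funext hjet, aeval_pow_mul_of_isWeightedHomogeneous
      (MvPolynomial.weightedHomogeneousComponent_isWeightedHomogeneous e Q), smul_comp,
      smul_eq_C_mul, C_pow, mvPolynomial_aeval_comp]
  have hTg_le := natDegree_le_of_degree_le (hQ g hg)
  rw [hTg, natDegree_comp, natDegree_C_mul_X a ha, mul_one] at hTg_le
  exact mem_degreeLE.mpr (degree_le_of_natDegree_le hTg_le)

theorem degWeight_component (hQ : PreservesDegreeLE K n Q) (k : ℕ) :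
    PreservesDegreeLE K n (MvPolynomial.weightedHomogeneousComponent (degWeight r) k Q) := by
  refine hQ.weightedHomogeneousComponent (fun c _ f hf => ⟨c • f, (degree_smul_le c f).trans hf,
    1, one_ne_zero, fun i => Fin.cases ?_ (fun j => ?_) i⟩) k
  · simp
  · simp [smul_eq_C_mul]

theorem dilWeight_component (hQ : PreservesDegreeLE K n Q) (W : ℕ) :
    PreservesDegreeLE K n (MvPolynomial.weightedHomogeneousComponent (dilWeight r) W Q) := by
  refine hQ.weightedHomogeneousComponent (fun c hc f hf =>
    ⟨C c ^ r * f.comp (C c⁻¹ * X), ?_, c⁻¹, inv_ne_zero hc,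
      fun i => Fin.cases ?_ (fun j => ?_) i⟩) W
  · rw [← C_pow, degree_C_mul (pow_ne_zero r hc)]
    refine degree_le_of_natDegree_le ?_
    rw [natDegree_comp, natDegree_C_mul_X _ (inv_ne_zero hc), mul_one]
    exact natDegree_le_of_degree_le hf
  · simp [← mul_assoc, ← C_mul, hc]
  · have hpow : c ^ r * c⁻¹ ^ (j : ℕ) = c ^ (r - j : ℕ) := by
      rw [pow_sub₀ c hc (Nat.lt_succ_iff.mp j.2), inv_pow]
    rw [jet_succ, jet_succ, dilWeight_succ, ← C_pow, iterate_derivative_C_mul,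
      iterate_derivative_comp_C_mul_X, ← mul_assoc, ← C_pow, ← C_mul, hpow, C_pow]

end Components

theorem eq_zero_of_isWeightedHomogeneous [Field K] [CharZero K] {N k W : ℕ} (hk : N + r < N * k)
    {R : MvPolynomial (Fin (r + 2)) K} (hR : PreservesDegreeLE K (N + r) R)
    (hdeg : MvPolynomial.IsWeightedHomogeneous (degWeight r) R k)
    (hdil : MvPolynomial.IsWeightedHomogeneous (dilWeight r) R W) : R = 0 := by
  refine eq_zero_of_isWeightedHomogeneous_of_eval_eq_zero hdil (j := 0) rfl fun v hv => ?_
  obtain ⟨G, hGdeg, hGdvd, hGjet⟩ := exists_deformation N fun i => v i.succ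
  set P := MvPolynomial.aeval (jet r G) R with hP
  have hP_dvd : C X ^ (N * k + W) ∣ P.comp (C X * X) := by
    rw [hP, mvPolynomial_aeval_comp]
    refine pow_dvd_aeval_of_isWeightedHomogeneous (isWeightedHomogeneous_mul_add hdeg hdil N)
      fun i => Fin.cases ?_ (fun j => ?_) i
    · simp
    · have hj : N + r - j = N * 1 + (r - j) := by omega
      rw [degWeight_succ, dilWeight_succ, jet_succ, ← hj]
      exact C_pow_sub_dvd_iterate_derivative_comp X_ne_zero (by omega) hGdvd
  have hP1_dvd : X ^ (W + 1) ∣ P.eval 1 := (pow_dvd_pow X (by omega)).trans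
    (pow_sub_dvd_eval_of_C_pow_dvd_comp X_ne_zero (hR.polynomial G hGdeg) hP_dvd 1)
  have hP1_natDegree : (P.eval 1).natDegree ≤ W := by
    rw [hP, eval_mvPolynomial_aeval]
    refine natDegree_aeval_le_of_isWeightedHomogeneous hdil
      fun i => Fin.cases ?_ (fun j => ?_) i
    · simp
    · exact (hGjet j).1
  have hP1 : P.eval 1 = 0 := by
    refine eq_zero_of_dvd_of_natDegree_lt hP1_dvd ?_
    rw [natDegree_X_pow]
    omega
  have hv_jet : v = fun i => ((jet r G i).eval 1).eval 1 := by
    funext i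
    refine Fin.cases ?_ (fun j => ?_) i
    · simp [hv]
    · exact (hGjet j).2.symm
  rw [← MvPolynomial.coe_aeval_eq_eval, RingHom.coe_coe, hv_jet, ← eval_mvPolynomial_aeval,
    ← eval_mvPolynomial_aeval, ← hP, hP1, eval_zero]

end PreservesDegreeLE

end Jets

theorem low_order_implies_at_most_quadratic_general {K : Type*} [Field K] [CharZero K]
    {n r d : ℕ} (hr : (d + 1) * r < d * n) {Q : MvPolynomial (Fin (r + 2)) K}
    (hQ : PreservesDegreeLE K n Q) : ∀ s ∈ Q.support, ∑ i : Fin (r + 1), s i.succ ≤ d := by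
  intro s hs
  by_contra! hds
  set k := ∑ i : Fin (r + 1), s i.succ
  set W := Finsupp.weight (dilWeight r) s with hW
  set R := MvPolynomial.weightedHomogeneousComponent (dilWeight r) W
    (MvPolynomial.weightedHomogeneousComponent (degWeight r) k Q) with hR
  obtain ⟨N, rfl⟩ : ∃ N, n = N + r := ⟨n - r, by rw [Nat.sub_add_cancel]; nlinarith⟩
  have hNk : N + r < N * k := by nlinarith
  have hR0 : R = 0 :=
    ((hQ.degWeight_component k).dilWeight_component W).eq_zero_of_isWeightedHomogeneous hNk
      (isWeightedHomogeneous_weightedHomogeneousComponent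
        (MvPolynomial.weightedHomogeneousComponent_isWeightedHomogeneous k Q) _ W)
      (MvPolynomial.weightedHomogeneousComponent_isWeightedHomogeneous W _)
  have hcoeff : R.coeff s = Q.coeff s := by
    rw [hR, MvPolynomial.coeff_weightedHomogeneousComponent, if_pos hW.symm,
      MvPolynomial.coeff_weightedHomogeneousComponent, if_pos (weight_degWeight s)]
  rw [hR0, MvPolynomial.coeff_zero] at hcoeff
  exact MvPolynomial.mem_support_iff.mp hs hcoeff.symm

/-- If `3r < 2n` and the operator `T_Q` of order at most `r` maps every
polynomial of degree at most `n` to a polynomial of degree at most `n`, then every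
monomial of `Q` has total degree at most `2` in the variables `u_0, …, u_r`:
the operator has at most quadratic non-linearities. -/
theorem low_order_implies_at_most_quadratic (n r : ℕ) (hr : 3 * r < 2 * n)
    (Q : MvPolynomial (Fin (r + 2)) ℝ)
    (h : ∀ f : Polynomial ℝ, f.degree ≤ (n : WithBot ℕ) →
      (Tact Q f).degree ≤ (n : WithBot ℕ)) :
    ∀ s ∈ Q.support, (∑ i : Fin (r + 1), s i.succ) ≤ 2 :=
  low_order_implies_at_most_quadratic_general hr h
end

section
/- Fix n ≥ 1 and an integer k with −n ≤ k ≤ n. Set r_min := ⌈(n+k)/2⌉, r_max := min(n, n+k), and for an integer r with r_min ≤ r ≤ r_max set m(k,r) := k + 2·(r − r_min). For f ∈ ℝ[x] define the quadratic autonomous operator Q_{k,r}[f] := Σ_{i=n+k−r}^{r} (−1)^i · C(i−k+1, n−r+1) · C(n−i, n−r) · f^{(i)} · f^{(n+k−i)}. Then for every polynomial f of degree at most n, Q_{k,r}[f] has degree at most n − m(k,r), and there exists a polynomial f of degree at most n such that Q_{k,r}[f] has degree exactly n − m(k,r); i.e., the operator Q_{k,r} has monomial deficiency k, order r, and deficiency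 exactly m(k,r) relative to P_n. -/
open Polynomial

/-!
On monomials, `∑_{i+j=t} (-1)^i V(i) (x^p)^{(i)} (x^q)^{(j)}` is a multiple of `x^M`, where
`M = p + q - t`, and after clearing factorials its coefficient is the `M`-th finite difference of
the polynomial `V`: it vanishes for `M > deg V` and is a nonzero constant for `M = deg V`. On the
diagonal, `V` may be replaced by its symmetrization under `i ↔ t - i`. For the weight of `Q_{k,r}`,
with `s = n - r`, the symmetrization is `(n-i)_s (n-j)_s ((n-j+1) + (-1)^t (n-i+1))` in falling
factorials, of degree `2s + (t mod 2) = n - m(k,r)`.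
-/

open scoped Nat

open Finset.HasAntidiagonal (antidiagonal mem_antidiagonal)

namespace QuadraticAutonomous

lemma fwdDiff_iter_sub_eq_sum_antidiagonal {M G : Type*} [AddCommGroup M] [AddCommGroup G] (h : M)
    (f : M → G) (n : ℕ) (y : M) :
    (fwdDiff h)^[n] f (y - n • h) =
      ∑ ed ∈ antidiagonal n, ((-1 : ℤ) ^ ed.1 * n.choose ed.1) • f (y - ed.1 • h) := by
  rw [fwdDiff_iter_eq_sum_shift, ← Finset.Nat.sum_antidiagonal_swap,
    Finset.Nat.sum_antidiagonal_eq_sum_range_succ_mk]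
  refine Finset.sum_congr rfl fun d hd => ?_
  have hdn : d ≤ n := Finset.mem_range_succ_iff.mp hd
  have hshift : y - n • h + d • h = y - (n - d) • h := by
    rw [sub_nsmul h hdn]
    abel
  simp only [Prod.fst_swap, Nat.choose_symm hdn, hshift]

section Pairing

variable {R : Type*} [CommRing R]

/-- The bilinear differential operator `(f, g) ↦ ∑_{i+j=t} (-1)^i V(i) f^{(i)} g^{(j)}`, whose
diagonal is the quadratic autonomous operator with alternating polynomial weight `V`. -/
noncomputable def alternatingPairing (V : R[X]) (t : ℕ) : R[X] →ₗ[R] R[X] →ₗ[R] R[X] :=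
  ∑ ij ∈ antidiagonal t, ((-1) ^ ij.1 * V.eval (ij.1 : R)) •
    (LinearMap.mul R R[X]).compl₁₂ (derivative ^ ij.1) (derivative ^ ij.2)

lemma alternatingPairing_apply (V : R[X]) (t : ℕ) (f g : R[X]) :
    alternatingPairing V t f g = ∑ ij ∈ antidiagonal t,
      ((-1) ^ ij.1 * V.eval (ij.1 : R)) • (derivative^[ij.1] f * derivative^[ij.2] g) := by
  simp [alternatingPairing, Module.End.pow_apply]

/-- The part of the weight `V` that survives on the diagonal of `alternatingPairing V t`, up to a
factor `2`: exchanging `i` and `t - i` changes the sign `(-1) ^ i` by `(-1) ^ t`. -/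
noncomputable def symmetrization (V : R[X]) (t : ℕ) : R[X] :=
  V + (-1) ^ t * V.comp (C (t : R) - X)

lemma alternatingPairing_symmetrization_self (V : R[X]) (t : ℕ) (f : R[X]) :
    alternatingPairing (symmetrization V t) t f f = (2 : R) • alternatingPairing V t f f := by
  rw [two_smul, alternatingPairing_apply, alternatingPairing_apply]
  nth_rewrite 3 [← Finset.Nat.sum_antidiagonal_swap]
  rw [← Finset.sum_add_distrib]
  refine Finset.sum_congr rfl fun ⟨i, j⟩ hij => ?_
  obtain rfl : i + j = t := mem_antidiagonal.mp hij
  have hsign : (-1 : R) ^ i * (-1) ^ (i + j) = (-1) ^ j := by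
    rw [pow_add, ← mul_assoc, ← mul_pow, neg_one_mul, neg_neg, one_pow, one_mul]
  have hflip : ((i + j : ℕ) : R) - i = j := by
    rw [Nat.cast_add, add_sub_cancel_left]
  simp only [symmetrization, Prod.swap, eval_add, eval_mul, eval_pow, eval_neg, eval_one, eval_comp,
    eval_sub, eval_C, eval_X, hflip]
  rw [mul_add, ← mul_assoc, hsign, add_smul, mul_comm (derivative^[j] f)]

lemma iterate_derivative_mul_iterate_derivative_eq_zero {f g : R[X]} {m n i j : ℕ}
    (hf : f.natDegree ≤ m) (hg : g.natDegree ≤ n) (h : m < i ∨ n < j) :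
    derivative^[i] f * derivative^[j] g = 0 := by
  rcases h with hi | hj
  · rw [iterate_derivative_eq_zero (hf.trans_lt hi), zero_mul]
  · rw [iterate_derivative_eq_zero (hg.trans_lt hj), mul_zero]

lemma alternatingPairing_eq_zero_of_add_lt (V : R[X]) {f g : R[X]} {m n t : ℕ}
    (hf : f.natDegree ≤ m) (hg : g.natDegree ≤ n) (h : m + n < t) :
    alternatingPairing V t f g = 0 := by
  rw [alternatingPairing_apply]
  refine Finset.sum_eq_zero fun ⟨i, j⟩ hij => ?_
  rw [mem_antidiagonal] at hij
  rw [iterate_derivative_mul_iterate_derivative_eq_zero hf hg (by omega), smul_zero]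

/-- The weight `V` vanishes at every integer `i` outside `[0, t]` with `i ≤ m` and `t - i ≤ n`.
For arguments of degrees at most `m` and `n`, the sum over `[0, t]` defining
`alternatingPairing V t` can then be completed to an alternating binomial sum. -/
def VanishesOutside (V : R[X]) (t m n : ℕ) : Prop :=
  ∀ i j : ℤ, i + j = t → i ≤ m → j ≤ n → i < 0 ∨ j < 0 → V.eval (i : R) = 0

lemma VanishesOutside.mono {V : R[X]} {t m n p q : ℕ} (hV : VanishesOutside V t m n) (hp : p ≤ m)
    (hq : q ≤ n) : VanishesOutside V t p q :=
  fun i j hij hi hj => hV i j hij (hi.trans (mod_cast hp)) (hj.trans (mod_cast hq))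

end Pairing

section Degree

variable {K : Type*} [Field K] [CharZero K]

lemma iterate_derivative_X_pow_mul_iterate_derivative_X_pow (i j e d : ℕ) :
    derivative^[i] (X ^ (i + e) : K[X]) * derivative^[j] (X ^ (j + d)) =
      monomial (e + d) ((i + e)! * (j + d)! / (e + d)! * (e + d).choose e : K) := by
  have hi : (e ! : K) * (i + e).descFactorial i = (i + e)! := by
    exact_mod_cast Nat.add_sub_cancel_left (n := i) (m := e) ▸
      Nat.factorial_mul_descFactorial (Nat.le_add_right i e)
  have hj : (d ! : K) * (j + d).descFactorial j = (j + d)! := by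
    exact_mod_cast Nat.add_sub_cancel_left (n := j) (m := d) ▸
      Nat.factorial_mul_descFactorial (Nat.le_add_right j d)
  have he := Nat.cast_ne_zero (R := K).mpr e.factorial_ne_zero
  have hd := Nat.cast_ne_zero (R := K).mpr d.factorial_ne_zero
  have hed := Nat.cast_ne_zero (R := K).mpr (e + d).factorial_ne_zero
  rw [iterate_derivative_X_pow_eq_C_mul, iterate_derivative_X_pow_eq_C_mul, C_mul_X_pow_eq_monomial,
    C_mul_X_pow_eq_monomial, monomial_mul_monomial, Nat.add_sub_cancel_left,
    Nat.add_sub_cancel_left, Nat.cast_add_choose, ← hi, ← hj]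
  congr 1
  field_simp

lemma alternatingPairing_X_pow_X_pow (V : K[X]) {p q t M : ℕ} (hpq : p + q = t + M)
    (hV : VanishesOutside V t p q) :
    alternatingPairing V t (X ^ p) (X ^ q) =
      monomial M ((-1) ^ p * (p ! * q ! / M !) * (fwdDiff 1)^[M] V.eval (p - M : K)) := by
  have hdiff := fwdDiff_iter_sub_eq_sum_antidiagonal 1 V.eval M (p : K)
  rw [nsmul_one] at hdiff
  rw [alternatingPairing_apply, hdiff, Finset.mul_sum, map_sum,
    ← Finset.sum_filter_of_ne (p := fun ij : ℕ × ℕ => ij.1 ≤ p ∧ ij.2 ≤ q),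
    ← Finset.sum_filter_of_ne (s := antidiagonal M)
      (p := fun ed : ℕ × ℕ => ed.1 ≤ p ∧ ed.2 ≤ q)]
  · refine Finset.sum_nbij' (fun ij => (p - ij.1, q - ij.2)) (fun ed => (p - ed.1, q - ed.2))
      ?_ ?_ ?_ ?_ ?_ <;>
      simp only [Finset.mem_filter, mem_antidiagonal, Prod.forall, Prod.mk.injEq]
    iterate 4 omega
    rintro i j ⟨hij, hip, hjq⟩
    obtain ⟨e, rfl⟩ := Nat.exists_eq_add_of_le hip
    obtain ⟨d, rfl⟩ := Nat.exists_eq_add_of_le hjq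
    obtain rfl : M = e + d := by omega
    have hsign : (-1 : K) ^ (i + e) * (-1) ^ e = (-1) ^ i := by
      rw [pow_add, mul_assoc, ← mul_pow, neg_one_mul, neg_neg, one_pow, mul_one]
    rw [iterate_derivative_X_pow_mul_iterate_derivative_X_pow, smul_monomial,
      Nat.add_sub_cancel_left, ← hsign]
    push_cast [zsmul_eq_mul, smul_eq_mul, add_sub_cancel_right]
    ring_nf
  · rintro ⟨e, d⟩ hed hne
    by_contra hlt
    simp only [not_and_or, not_le] at hlt
    rw [mem_antidiagonal] at hed
    have hzero := hV (p - e) (q - d) (by omega) (by omega) (by omega) (by omega)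
    push_cast at hzero
    refine hne ?_
    rw [nsmul_one, hzero, smul_zero, mul_zero, map_zero]
  · rintro ⟨i, j⟩ - hne
    by_contra hlt
    simp only [not_and_or, not_le] at hlt
    refine hne ?_
    rw [iterate_derivative_mul_iterate_derivative_eq_zero (natDegree_X_pow_le p)
      (natDegree_X_pow_le q) hlt, smul_zero]

lemma degree_alternatingPairing_le (V : K[X]) {m n t : ℕ}
    (hV : VanishesOutside V t m n) {f g : K[X]} (hf : f.degree ≤ m) (hg : g.degree ≤ n) :
    (alternatingPairing V t f g).degree ≤ V.natDegree := by
  classical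
  rw [← mem_degreeLE, degreeLE_eq_span_X_pow] at hf hg
  rw [← mem_degreeLE]
  refine LinearMap.BilinMap.apply_apply_mem_of_mem_span _ _ _ _ ?_ f g hf hg
  simp only [Finset.coe_image, Set.forall_mem_image, Finset.coe_range, Set.mem_Iio]
  intro p hp q hq
  rw [mem_degreeLE]
  rcases lt_or_ge (p + q) t with hlt | hge
  · rw [alternatingPairing_eq_zero_of_add_lt V (natDegree_X_pow_le p) (natDegree_X_pow_le q) hlt,
      degree_zero]
    exact bot_le
  obtain ⟨M, hM⟩ := Nat.exists_eq_add_of_le hge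
  rw [alternatingPairing_X_pow_X_pow V hM (hV.mono (Nat.le_of_lt_succ hp) (Nat.le_of_lt_succ hq))]
  rcases lt_or_ge V.natDegree M with h | h
  · simp [fwdDiff_iter_eq_zero_of_degree_lt h]
  · exact (degree_monomial_le _ _).trans (mod_cast h)

lemma degree_alternatingPairing_X_pow_X_pow {V : K[X]} (hV₀ : V ≠ 0) {p q t : ℕ}
    (hpq : p + q = t + V.natDegree) (hV : VanishesOutside V t p q) :
    (alternatingPairing V t (X ^ p) (X ^ q)).degree = V.natDegree := by
  rw [alternatingPairing_X_pow_X_pow V hpq hV, fwdDiff_iter_degree_eq_factorial]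
  refine degree_monomial _ ?_
  simp [hV₀, Nat.factorial_ne_zero]

end Degree

section Weight

variable {R : Type*} [CommRing R]

variable (R) in
/-- The weight polynomial of the operator of order `r = n - s` on polynomials of degree at most `n`:
its value at `i` is `s! (s + 1)!` times the coefficient `C(n - j + 1, s + 1) C(n - i, s)`, where
`i + j = t`. -/
noncomputable def binomialWeight (n s t : ℕ) : R[X] :=
  (descPochhammer R (s + 1)).comp (X + C (n - t + 1 : R)) *
    (descPochhammer R s).comp (C (n : R) - X)

lemma eval_binomialWeight {n i j t : ℕ} (hij : i + j = t) (hi : i ≤ n) (hj : j ≤ n) (s : ℕ) :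
    (binomialWeight R n s t).eval (i : R) =
      (n - j + 1).descFactorial (s + 1) * (n - i).descFactorial s := by
  have hni : (n - i : R) = (n - i : ℕ) := (Nat.cast_sub hi).symm
  have hnj : (i + (n - t + 1) : R) = (n - j + 1 : ℕ) := by
    push_cast [← hij, Nat.cast_sub hj]
    ring
  simp only [binomialWeight, eval_mul, eval_comp, eval_sub, eval_add, eval_C, eval_X, hni, hnj,
    descPochhammer_eval_eq_descFactorial]

lemma symmetrization_binomialWeight (n s t : ℕ) :
    symmetrization (binomialWeight R n s t) t =
      (descPochhammer R s).comp (X + C (n - t : R)) * (descPochhammer R s).comp (C (n : R) - X) *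
        (X + C (n - t + 1 : R) + (-1) ^ t * (C (n + 1 : R) - X)) := by
  have hflip₁ : C (t : R) - X + C (n - t : R) = C (n : R) - X := by
    rw [C_sub]
    ring
  have hflip₂ : C (n : R) - (C (t : R) - X) = X + C (n - t : R) := by
    rw [C_sub]
    ring
  simp only [symmetrization, binomialWeight, descPochhammer_succ_left, mul_comp, comp_assoc,
    sub_comp, add_comp, X_comp, C_comp, one_comp, C_add, C_1, ← add_assoc, hflip₁, hflip₂,
    add_sub_cancel_right]
  ring

lemma vanishesOutside_symmetrization_binomialWeight {n s t : ℕ} (hn : n ≤ s + t) :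
    VanishesOutside (symmetrization (binomialWeight R n s t) t) t n n := by
  intro i j hij hi hj hneg
  obtain ⟨a, ha⟩ := Int.eq_ofNat_of_zero_le (sub_nonneg.mpr hi)
  obtain ⟨b, hb⟩ := Int.eq_ofNat_of_zero_le (sub_nonneg.mpr hj)
  have hni : (n - i : R) = a := mod_cast congrArg (Int.cast : ℤ → R) ha
  have hnj : (i + (n - t) : R) = b := mod_cast congrArg (Int.cast : ℤ → R)
    (show i + (n - t) = (b : ℤ) by omega)
  rw [symmetrization_binomialWeight]
  simp only [eval_mul, eval_comp, eval_sub, eval_add, eval_C, eval_X, hni, hnj,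
    descPochhammer_eval_eq_descFactorial]
  rcases hneg with hi | hj
  · rw [Nat.descFactorial_of_lt (show b < s by omega), Nat.cast_zero, zero_mul, zero_mul]
  · rw [Nat.descFactorial_of_lt (show a < s by omega), Nat.cast_zero, mul_zero, zero_mul]

/-- The quadratic autonomous operator `Q_{k,r}` relative to polynomials of degree at most `n`, where
`t = n + k` is the total order of differentiation, so that `i - k + 1 = n - (t - i) + 1`. -/
noncomputable def quadraticAutonomous (n r t : ℕ) (f : R[X]) : R[X] :=
  ∑ i ∈ Finset.Icc (t - r) r,
    ((-1 : R) ^ i * (n - (t - i) + 1).choose (n - r + 1) * (n - i).choose (n - r)) •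
      (derivative^[i] f * derivative^[t - i] f)

lemma alternatingPairing_binomialWeight_self {n r t : ℕ} (hrn : r ≤ n) (hrt : r ≤ t) {f : R[X]}
    (hf : f.natDegree ≤ n) :
    alternatingPairing (binomialWeight R n (n - r) t) t f f =
      (((n - r + 1)! * (n - r)! : ℕ) : R) • quadraticAutonomous n r t f := by
  have hvalue (i : ℕ) (hit : i ≤ t) (hin : i ≤ n) (hjn : t - i ≤ n) :
      (binomialWeight R n (n - r) t).eval (i : R) =
        ((n - r + 1)! * (n - r)! : ℕ) *
          ((n - (t - i) + 1).choose (n - r + 1) * (n - i).choose (n - r)) := by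
    rw [eval_binomialWeight (Nat.add_sub_cancel' hit) hin hjn,
      Nat.descFactorial_eq_factorial_mul_choose,
      Nat.descFactorial_eq_factorial_mul_choose]
    push_cast
    ring
  rw [alternatingPairing_apply, Finset.Nat.sum_antidiagonal_eq_sum_range_succ_mk,
    quadraticAutonomous, Finset.smul_sum]
  symm
  refine Finset.sum_subset_zero_on_sdiff (fun i hi => ?_) (fun i hi => ?_) (fun i hi => ?_)
  · rw [Finset.mem_Icc] at hi
    rw [Finset.mem_range]
    omega
  · simp only [Finset.mem_sdiff, Finset.mem_range, Finset.mem_Icc] at hi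
    by_cases hn : i ≤ n ∧ t - i ≤ n
    · rcases (show n - (t - i) + 1 < n - r + 1 ∨ n - i < n - r by omega) with h | h <;>
        simp [hvalue i (by omega) hn.1 hn.2, Nat.choose_eq_zero_of_lt h]
    · rw [iterate_derivative_mul_iterate_derivative_eq_zero hf hf (by omega), smul_zero]
  · rw [Finset.mem_Icc] at hi
    rw [hvalue i (by omega) (by omega) (by omega), smul_smul]
    congr 1
    ring

end Weight

section Deficiency

variable {K : Type*} [Field K] [CharZero K]

lemma degree_X_add_C_add_neg_one_pow_mul_C_sub_X {a b : K} (hab : a + b ≠ 0) (t : ℕ) :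
    (X + C b + (-1) ^ t * (C a - X)).degree = ((t % 2 : ℕ) : WithBot ℕ) := by
  rcases Nat.even_or_odd t with ht | ht
  · have hconst : X + C b + (-1) ^ t * (C a - X) = C (a + b) := by
      rw [ht.neg_one_pow, C_add]
      ring
    rw [hconst, degree_C hab, Nat.even_iff.mp ht, Nat.cast_zero]
  · have hlinear : X + C b + (-1) ^ t * (C a - X) = C 2 * X + C (b - a) := by
      rw [ht.neg_one_pow, C_sub, C_ofNat]
      ring
    rw [hlinear, degree_linear two_ne_zero, Nat.odd_iff.mp ht, Nat.cast_one]

lemma degree_symmetrization_binomialWeight {n t : ℕ} (s : ℕ) (ht : t ≤ n + n) :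
    (symmetrization (binomialWeight K n s t) t).degree = (2 * s + t % 2 : ℕ) := by
  have hadd : (X + C (n - t : K)).degree = 1 := degree_X_add_C _
  have hsub : (C (n : K) - X).degree = 1 := by
    rw [← neg_sub, degree_neg, degree_X_sub_C]
  have hdesc : (descPochhammer K s).degree = s := by
    rw [degree_eq_natDegree (monic_descPochhammer K s).ne_zero, descPochhammer_natDegree]
  have hne : (n + 1 + (n - t + 1) : K) ≠ 0 := by
    have hcast : (n + 1 + (n - t + 1) : K) = ((n + n - t + 2 : ℕ) : K) := by
      push_cast [Nat.cast_sub ht]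
      ring
    rw [hcast]
    exact Nat.cast_ne_zero.mpr (by omega)
  rw [symmetrization_binomialWeight, degree_mul, degree_mul,
    degree_X_add_C_add_neg_one_pow_mul_C_sub_X hne,
    degree_comp (hadd ▸ one_pos), degree_comp (hsub ▸ one_pos), hadd, hsub, hdesc]
  norm_cast
  rw [mul_one, two_mul]

lemma degree_quadraticAutonomous_eq {n r t : ℕ} (hrn : r ≤ n) (hrt : r ≤ t) {f : K[X]}
    (hf : f.natDegree ≤ n) :
    (quadraticAutonomous n r t f).degree =
      (alternatingPairing (symmetrization (binomialWeight K n (n - r) t) t) t f f).degree := by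
  have hfactorial : (((n - r + 1)! * (n - r)! : ℕ) : K) ≠ 0 :=
    Nat.cast_ne_zero.mpr (mul_ne_zero (Nat.factorial_ne_zero _) (Nat.factorial_ne_zero _))
  rw [alternatingPairing_symmetrization_self, alternatingPairing_binomialWeight_self hrn hrt hf,
    smul_smul, smul_eq_C_mul, degree_C_mul (mul_ne_zero two_ne_zero hfactorial)]

lemma degree_quadraticAutonomous_le {n r t : ℕ} (hrn : r ≤ n) (hrt : r ≤ t) (htn : t ≤ n + n)
    {f : K[X]} (hf : f.degree ≤ n) :
    (quadraticAutonomous n r t f).degree ≤ ((2 * (n - r) + t % 2 : ℕ) : WithBot ℕ) := by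
  rw [degree_quadraticAutonomous_eq hrn hrt (natDegree_le_of_degree_le hf),
    ← natDegree_eq_of_degree_eq_some
      (degree_symmetrization_binomialWeight (K := K) (n - r) htn)]
  exact degree_alternatingPairing_le _ (vanishesOutside_symmetrization_binomialWeight (by omega))
    hf hf

lemma degree_quadraticAutonomous_X_pow {n r t : ℕ} (hrn : r ≤ n) (hrt : r ≤ t) (htr : t ≤ 2 * r) :
    (quadraticAutonomous n r t (X ^ ((t + 1) / 2 + (n - r)) : K[X])).degree =
      ((2 * (n - r) + t % 2 : ℕ) : WithBot ℕ) := by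
  have hdegree := degree_symmetrization_binomialWeight (K := K) (n := n) (t := t) (n - r) (by omega)
  have hnatDegree := natDegree_eq_of_degree_eq_some hdegree
  have hp : (t + 1) / 2 + (n - r) ≤ n := by omega
  rw [degree_quadraticAutonomous_eq hrn hrt ((natDegree_X_pow_le _).trans hp), ← hnatDegree]
  exact degree_alternatingPairing_X_pow_X_pow
    (ne_zero_of_degree_gt (n := ⊥) (hdegree ▸ WithBot.bot_lt_coe _)) (by omega)
    ((vanishesOutside_symmetrization_binomialWeight (by omega)).mono hp hp)

end Deficiency

end QuadraticAutonomous

open QuadraticAutonomous in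
theorem quadratic_autonomous_deficiency_general {K : Type*} [Field K] [CharZero K] (n : ℕ) (k : ℤ)
    (t rmin rmax : ℕ) (ht : (t : ℤ) = (n : ℤ) + k)
    (hrmin : rmin = (t + 1) / 2) (hrmax : rmax = min n t)
    (r : ℕ) (hr1 : rmin ≤ r) (hr2 : r ≤ rmax)
    (mkr : ℤ) (hmkr : mkr = k + 2 * ((r : ℤ) - (rmin : ℤ)))
    (Qkr : K[X] → K[X])
    (hQkr : ∀ f : K[X], Qkr f =
      ∑ i ∈ Finset.Icc (t - r) r,
        ((-1 : K) ^ i * ((((i : ℤ) - k + 1).toNat.choose (n - r + 1) : ℕ) : K) *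
          (((n - i).choose (n - r) : ℕ) : K)) •
          (derivative^[i] f * derivative^[((n : ℤ) + k - (i : ℤ)).toNat] f)) :
    (∀ f : K[X], f.degree ≤ (n : WithBot ℕ) →
      (Qkr f).degree ≤ ((((n : ℤ) - mkr).toNat : ℕ) : WithBot ℕ)) ∧
    ∃ f : K[X], f.degree ≤ (n : WithBot ℕ) ∧
      (Qkr f).degree = ((((n : ℤ) - mkr).toNat : ℕ) : WithBot ℕ) := by
  have hQ : Qkr = quadraticAutonomous n r t := by
    funext f
    rw [hQkr, quadraticAutonomous]
    refine Finset.sum_congr rfl fun i hi => ?_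
    rw [Finset.mem_Icc] at hi
    rw [show ((i : ℤ) - k + 1).toNat = n - (t - i) + 1 by omega,
      show ((n : ℤ) + k - (i : ℤ)).toNat = t - i by omega]
  have hdegree : ((n : ℤ) - mkr).toNat = 2 * (n - r) + t % 2 := by omega
  rw [hQ, hdegree]
  refine ⟨fun f hf => degree_quadraticAutonomous_le (by omega) (by omega) (by omega) hf,
    X ^ ((t + 1) / 2 + (n - r)), ?_,
    degree_quadraticAutonomous_X_pow (by omega) (by omega) (by omega)⟩
  exact (degree_X_pow_le _).trans (Nat.cast_le.mpr (by omega))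

/-- Fix `n ≥ 1` and `−n ≤ k ≤ n`; let `t = n + k`,
`r_min = ⌈(n+k)/2⌉`, `r_max = min(n, n+k)`, and for `r_min ≤ r ≤ r_max` let
`m(k,r) = k + 2(r − r_min)`.  The quadratic autonomous operator
`Q_{k,r}[f] = ∑_{i=n+k−r}^{r} (−1)^i C(i−k+1, n−r+1) C(n−i, n−r) f^{(i)} f^{(n+k−i)}`
maps every `f ∈ P_n` into `P_{n−m(k,r)}`, and attains degree exactly `n − m(k,r)` on
some `f ∈ P_n`: it has monomial deficiency `k`, order `r`, and deficiency exactly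
`m(k,r)` relative to `P_n`. -/
theorem quadratic_autonomous_deficiency (n : ℕ) (hn : 1 ≤ n)
    (k : ℤ) (hk1 : -(n : ℤ) ≤ k) (hk2 : k ≤ (n : ℤ))
    (t rmin rmax : ℕ) (ht : (t : ℤ) = (n : ℤ) + k)
    (hrmin : rmin = (t + 1) / 2) (hrmax : rmax = min n t)
    (r : ℕ) (hr1 : rmin ≤ r) (hr2 : r ≤ rmax)
    (mkr : ℤ) (hmkr : mkr = k + 2 * ((r : ℤ) - (rmin : ℤ)))
    (Qkr : ℝ[X] → ℝ[X])
    (hQkr : ∀ f : ℝ[X], Qkr f =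
      ∑ i ∈ Finset.Icc (t - r) r,
        ((-1 : ℝ) ^ i * ((((i : ℤ) - k + 1).toNat.choose (n - r + 1) : ℕ) : ℝ) *
          (((n - i).choose (n - r) : ℕ) : ℝ)) •
          (derivative^[i] f * derivative^[((n : ℤ) + k - (i : ℤ)).toNat] f)) :
    (∀ f : ℝ[X], f.degree ≤ (n : WithBot ℕ) →
      (Qkr f).degree ≤ ((((n : ℤ) - mkr).toNat : ℕ) : WithBot ℕ)) ∧
    ∃ f : ℝ[X], f.degree ≤ (n : WithBot ℕ) ∧
      (Qkr f).degree = ((((n : ℤ) - mkr).toNat : ℕ) : WithBot ℕ) :=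
  quadratic_autonomous_deficiency_general n k t rmin rmax ht hrmin hrmax r hr1 hr2 mkr hmkr Qkr hQkr
end
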